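/- Let t > 0 and let μ be a t-uniformly log-concave probability measure on ℝⁿ. Then C_P(μ) ≤ √( ‖Cov(μ)‖_op / t ) ≤ 1/t, where ‖Cov(μ)‖_op is the operator norm of the covariance matrix of μ. -/

import Mathlib

open MeasureTheory Real
open scoped ENNReal RealInnerProductSpace

noncomputable section

abbrev Euc (n : ℕ) := EuclideanSpace ℝ (Fin n)

/-- A nonnegative function `g` is log-concave: `g(ax+by) ≥ g(x)^a g(y)^b`. -/
def IsLogConcaveFun {n : ℕ} (g : Euc n → ℝ) : Prop :=
  (∀ x, 0 ≤ g x) ∧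
  ∀ x y : Euc n, ∀ a b : ℝ, 0 ≤ a → 0 ≤ b → a + b = 1 →
    g x ^ a * g y ^ b ≤ g (a • x + b • y)

def IsLogConcaveMeasure {n : ℕ} (μ : Measure (Euc n)) : Prop :=
  ∃ ρ : Euc n → ℝ, Measurable ρ ∧ IsLogConcaveFun ρ ∧
    μ = volume.withDensity (fun x => ENNReal.ofReal (ρ x))

def poincareSet {n : ℕ} (μ : Measure (Euc n)) : Set ℝ :=
  {C : ℝ | 0 ≤ C ∧ ∀ f : Euc n → ℝ, LocallyLipschitz f →
    Integrable (fun x => ‖gradient f x‖ ^ 2) μ →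
    ∫ x, f x ^ 2 ∂μ - (∫ x, f x ∂μ) ^ 2 ≤ C * ∫ x, ‖gradient f x‖ ^ 2 ∂μ}

def poincareConst {n : ℕ} (μ : Measure (Euc n)) : ℝ := sInf (poincareSet μ)

def covMatrix {n : ℕ} (μ : Measure (Euc n)) : Matrix (Fin n) (Fin n) ℝ :=
  Matrix.of fun i j => ∫ x, x i * x j ∂μ - (∫ x, x i ∂μ) * (∫ x, x j ∂μ)

def opNorm {n : ℕ} (M : Matrix (Fin n) (Fin n) ℝ) : ℝ :=
  ‖Matrix.toEuclideanCLM (𝕜 := ℝ) M‖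

def IsIsotropic {n : ℕ} (μ : Measure (Euc n)) : Prop :=
  (∫ x, x ∂μ) = 0 ∧ ∀ i j, ∫ x, x i * x j ∂μ = if i = j then 1 else 0

def UniformlyLogConcave {n : ℕ} (t : ℝ) (μ : Measure (Euc n)) : Prop :=
  ∃ g : Euc n → ℝ, Measurable g ∧ IsLogConcaveFun g ∧
    μ = volume.withDensity (fun x => ENNReal.ofReal (Real.exp (-t * ‖x‖ ^ 2 / 2) * g x))

def IsRegularPotential {n : ℕ} (ψ : Euc n → ℝ) : Prop :=
  ContDiff ℝ (⊤ : ℕ∞) ψ ∧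
  (∃ ε : ℝ, 0 < ε ∧ ∀ x v : Euc n,
    ε * ‖v‖ ^ 2 ≤ iteratedFDeriv ℝ 2 ψ x ![v, v] ∧
    iteratedFDeriv ℝ 2 ψ x ![v, v] ≤ ε⁻¹ * ‖v‖ ^ 2) ∧
  (∀ m : ℕ, ∃ C : ℝ, ∃ k : ℕ, ∀ x, ‖iteratedFDeriv ℝ m ψ x‖ ≤ C * (1 + ‖x‖) ^ k)

def IsRegularMeasure {n : ℕ} (μ : Measure (Euc n)) (ψ : Euc n → ℝ) : Prop :=
  IsRegularPotential ψ ∧ μ = volume.withDensity (fun x => ENNReal.ofReal (Real.exp (-ψ x)))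

def IsTempered {n : ℕ} (ρ : Euc n → ℝ) (f : Euc n → ℝ) : Prop :=
  ContDiff ℝ (⊤ : ℕ∞) f ∧ ∀ m : ℕ, ∃ C : ℝ, 0 < C ∧ ∃ a : ℝ, 0 < a ∧ ∀ x,
    ‖iteratedFDeriv ℝ m f x‖ ≤ C / Real.sqrt (ρ x) * Real.exp (-a * ‖x‖)

def lap {n : ℕ} (f : Euc n → ℝ) (x : Euc n) : ℝ :=
  ∑ i, iteratedFDeriv ℝ 2 f x ![EuclideanSpace.single i (1:ℝ), EuclideanSpace.single i (1:ℝ)]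

def Lop {n : ℕ} (ψ u : Euc n → ℝ) (x : Euc n) : ℝ :=
  lap u x - ⟪gradient ψ x, gradient u x⟫

def gaussDensity (n : ℕ) (s : ℝ) (x : Euc n) : ℝ :=
  (2 * π * s) ^ (-(n : ℝ) / 2) * Real.exp (-‖x‖ ^ 2 / (2 * s))

def gaussMeasure (n : ℕ) (s : ℝ) : Measure (Euc n) :=
  volume.withDensity fun x => ENNReal.ofReal (gaussDensity n s x)

def tiltZ {n : ℕ} (ρ : Euc n → ℝ) (t : ℝ) (θ : Euc n) : ℝ :=
  ∫ x, Real.exp (⟪θ, x⟫ - t * ‖x‖ ^ 2 / 2) * ρ x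

def tiltDensity {n : ℕ} (ρ : Euc n → ℝ) (t : ℝ) (θ : Euc n) (x : Euc n) : ℝ :=
  Real.exp (⟪θ, x⟫ - t * ‖x‖ ^ 2 / 2) * ρ x / tiltZ ρ t θ

def tiltMeasure {n : ℕ} (ρ : Euc n → ℝ) (t : ℝ) (θ : Euc n) : Measure (Euc n) :=
  volume.withDensity fun x => ENNReal.ofReal (tiltDensity ρ t θ x)

def varD {n : ℕ} (p : Euc n → ℝ) (f : Euc n → ℝ) : ℝ :=
  (∫ x, f x ^ 2 * p x) - (∫ x, f x * p x) ^ 2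

end

/-
Let `L u = Δu - ∇ψ · ∇u` be the generator of the diffusion reversible for `exp (-ψ) dx`, with `ψ`
smooth and `t`-convex. The optimal constant `C` in `∫ ‖∇u‖² ≤ C ∫ (L u)²` is a Poincaré constant:
the variance of `f` is approached by `-∫ ∇f · ∇u`, where `L u` approximates `f - ∫ f`. The range of
`L` on test functions is dense in the mean-zero functions, because conjugation by `exp (ψ / 2)`
turns `L` into a Schrödinger operator, whose square-integrable null functions are the multiples of
`exp (-ψ / 2)`.
Bochner's formula bounds `t ∫ ‖∇u‖² + ∑ᵢ ∫ ‖∇∂ᵢu‖²` by `∫ (L u)²`. Applying the Poincaré inequality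
to each `∂ᵢu`, and `‖∫ ∇u‖² ≤ κ ∫ (L u)²` to their means (`κ` the norm of the covariance), improves
`C` to `(C + κ) / (1 + t C)`. Hence the optimal `C` satisfies `t C² ≤ κ`.
A general measure is a limit of smooth ones, obtained by sup-convolution and mollification of its
log-concave factor. Finally, linear functions show that `κ` is at most the Poincaré constant, so
that `κ ≤ √(κ / t)`, which is `κ ≤ 1 / t`.
-/

open scoped ContDiff Convolution

noncomputable section

section DirectionalDerivative

variable {E : Type*} [NormedAddCommGroup E] [NormedSpace ℝ E]

/-- The derivative of `u` in the fixed direction `v`, as a function of the base point. -/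
def dirDeriv (v : E) (u : E → ℝ) (x : E) : ℝ := fderiv ℝ u x v

theorem contDiff_dirDeriv {u : E → ℝ} (hu : ContDiff ℝ ∞ u) (v : E) :
    ContDiff ℝ ∞ (dirDeriv v u) :=
  (hu.fderiv_right (by norm_num)).clm_apply contDiff_const

theorem hasCompactSupport_dirDeriv {u : E → ℝ} (hu : HasCompactSupport u) (v : E) :
    HasCompactSupport (dirDeriv v u) :=
  hu.fderiv_apply ℝ v

theorem dirDeriv_of_notMem_tsupport {u : E → ℝ} {x : E} (hx : x ∉ tsupport u) (v : E) :
    dirDeriv v u x = 0 := by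
  simp [dirDeriv, fderiv_of_notMem_tsupport ℝ hx]

theorem tsupport_dirDeriv_subset (v : E) (u : E → ℝ) : tsupport (dirDeriv v u) ⊆ tsupport u :=
  tsupport_fderiv_apply_subset ℝ v

theorem dirDeriv_add {u w : E → ℝ} (hu : Differentiable ℝ u) (hw : Differentiable ℝ w) (v : E) :
    dirDeriv v (fun x => u x + w x) = fun x => dirDeriv v u x + dirDeriv v w x := by
  ext x
  simp [dirDeriv, fderiv_fun_add (hu x) (hw x)]

theorem dirDeriv_sub {u w : E → ℝ} (hu : Differentiable ℝ u) (hw : Differentiable ℝ w) (v : E) :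
    dirDeriv v (fun x => u x - w x) = fun x => dirDeriv v u x - dirDeriv v w x := by
  ext x
  simp [dirDeriv, fderiv_fun_sub (hu x) (hw x)]

theorem dirDeriv_mul {u w : E → ℝ} (hu : Differentiable ℝ u) (hw : Differentiable ℝ w) (v : E) :
    dirDeriv v (fun x => u x * w x) = fun x => u x * dirDeriv v w x + w x * dirDeriv v u x := by
  ext x
  simp [dirDeriv, fderiv_fun_mul (hu x) (hw x)]

theorem dirDeriv_const_mul {u : E → ℝ} (hu : Differentiable ℝ u) (c : ℝ) (v : E) :
    dirDeriv v (fun x => c * u x) = fun x => c * dirDeriv v u x := by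
  ext x
  simp [dirDeriv, fderiv_const_mul (hu x)]

theorem dirDeriv_sum {ι : Type*} (s : Finset ι) {u : ι → E → ℝ}
    (hu : ∀ i ∈ s, Differentiable ℝ (u i)) (v : E) :
    dirDeriv v (fun x => ∑ i ∈ s, u i x) = fun x => ∑ i ∈ s, dirDeriv v (u i) x := by
  ext x
  simp [dirDeriv, fderiv_fun_sum fun i hi => hu i hi x]

theorem dirDeriv_exp {u : E → ℝ} (hu : Differentiable ℝ u) (v : E) :
    dirDeriv v (fun x => exp (u x)) = fun x => exp (u x) * dirDeriv v u x := by
  ext x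
  simp [dirDeriv, fderiv_exp (hu x)]

theorem dirDeriv_dirDeriv {u : E → ℝ} (hu : ContDiff ℝ 2 u) (v w x : E) :
    dirDeriv v (dirDeriv w u) x = fderiv ℝ (fderiv ℝ u) x v w := by
  have hu' : Differentiable ℝ (fderiv ℝ u) :=
    (hu.fderiv_right (m := 1) (by norm_num)).differentiable one_ne_zero
  change fderiv ℝ (fun y => fderiv ℝ u y w) x v = _
  rw [fderiv_clm_apply (hu' x) (differentiableAt_const w)]
  simp

theorem dirDeriv_comm {u : E → ℝ} (hu : ContDiff ℝ 2 u) (v w : E) :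
    dirDeriv v (dirDeriv w u) = dirDeriv w (dirDeriv v u) := by
  ext x
  rw [dirDeriv_dirDeriv hu, dirDeriv_dirDeriv hu]
  exact (hu.contDiffAt.isSymmSndFDerivAt (by simp)).eq v w

theorem norm_dirDeriv_le_of_lipschitzWith {f : E → ℝ} {K : NNReal} (hf : LipschitzWith K f)
    (v x : E) :
    ‖dirDeriv v f x‖ ≤ K * ‖v‖ :=
  ((fderiv ℝ f x).le_opNorm v).trans
    (mul_le_mul_of_nonneg_right (norm_fderiv_le_of_lipschitz ℝ hf) (norm_nonneg v))

theorem measurable_dirDeriv [MeasurableSpace E] [OpensMeasurableSpace E] (f : E → ℝ) (v : E) :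
    Measurable (dirDeriv v f) :=
  measurable_fderiv_apply_const ℝ f v

theorem dirDeriv_mul_exp_neg {ψ w : E → ℝ} (hψ : Differentiable ℝ ψ) (hw : Differentiable ℝ w)
    (v x : E) :
    dirDeriv v (fun y => w y * exp (-ψ y)) x =
      (dirDeriv v w x - dirDeriv v ψ x * w x) * exp (-ψ x) := by
  have hneg : dirDeriv v (fun y => -ψ y) = fun y => -dirDeriv v ψ y := by
    ext y
    simp [dirDeriv]
  rw [dirDeriv_mul hw (w := fun y => exp (-ψ y)) hψ.neg.exp,
    dirDeriv_exp (u := fun y => -ψ y) hψ.neg, hneg]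
  ring

theorem dirDeriv_comp_const_sub {u : E → ℝ} (hu : Differentiable ℝ u) (v x : E) :
    dirDeriv v (fun y => u (x - y)) = fun y => -dirDeriv v u (x - y) := by
  ext y
  have h := (hu (x - y)).hasFDerivAt.comp y ((hasFDerivAt_id y).const_sub x)
  change fderiv ℝ (u ∘ fun y => x - y) y v = _
  simp [h.fderiv, dirDeriv]

/-- A test function: a smooth function with compact support. -/
structure IsTestFun (u : E → ℝ) : Prop where
  contDiff : ContDiff ℝ ∞ u
  hasCompactSupport : HasCompactSupport u

namespace IsTestFun

variable {u w : E → ℝ}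

theorem dirDeriv (hu : IsTestFun u) (v : E) : IsTestFun (dirDeriv v u) :=
  ⟨contDiff_dirDeriv hu.contDiff v, hasCompactSupport_dirDeriv hu.hasCompactSupport v⟩

theorem add (hu : IsTestFun u) (hw : IsTestFun w) : IsTestFun (u + w) :=
  ⟨hu.contDiff.add hw.contDiff, hu.hasCompactSupport.add hw.hasCompactSupport⟩

theorem const_smul (hu : IsTestFun u) (c : ℝ) : IsTestFun (c • u) :=
  ⟨contDiff_const.smul hu.contDiff, hu.hasCompactSupport.smul_left (f := fun _ => c)⟩

theorem mul_right (hu : IsTestFun u) (hw : ContDiff ℝ ∞ w) : IsTestFun (fun x => u x * w x) :=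
  ⟨hu.contDiff.mul hw, hu.hasCompactSupport.mul_right⟩

theorem comp_const_sub (hu : IsTestFun u) (x : E) : IsTestFun fun y => u (x - y) :=
  ⟨hu.contDiff.comp (contDiff_const.sub contDiff_id),
    hu.hasCompactSupport.comp_homeomorph (Homeomorph.subLeft x)⟩

theorem continuous (hu : IsTestFun u) : Continuous u := hu.contDiff.continuous

theorem differentiable (hu : IsTestFun u) : Differentiable ℝ u :=
  hu.contDiff.differentiable (by simp)

theorem exists_lipschitzWith (hw : IsTestFun w) : ∃ K, LipschitzWith K w :=
  hw.contDiff.lipschitzWith_of_hasCompactSupport hw.hasCompactSupport (by simp)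

variable [MeasurableSpace E] [BorelSpace E] {μ : Measure E} [IsFiniteMeasureOnCompacts μ]

theorem integrable (hu : IsTestFun u) : Integrable u μ :=
  hu.continuous.integrable_of_hasCompactSupport hu.hasCompactSupport

theorem memLp_two (hu : IsTestFun u) : MemLp u 2 μ :=
  hu.continuous.memLp_of_hasCompactSupport hu.hasCompactSupport

theorem integrable_mul (hu : IsTestFun u) (hw : Continuous w) :
    Integrable (fun x => u x * w x) μ :=
  (hu.continuous.mul hw).integrable_of_hasCompactSupport hu.hasCompactSupport.mul_right

end IsTestFun

theorem integrable_dirDeriv_mul_of_lipschitzWith [MeasurableSpace E] [BorelSpace E]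
    {μ : Measure E} [IsFiniteMeasureOnCompacts μ] {f w : E → ℝ} {K : NNReal}
    (hf : LipschitzWith K f) (hw : IsTestFun w) (v : E) :
    Integrable (fun x => dirDeriv v f x * w x) μ :=
  hw.integrable.bdd_mul (measurable_dirDeriv f v).aestronglyMeasurable
    (.of_forall (norm_dirDeriv_le_of_lipschitzWith hf v))

end DirectionalDerivative

section GibbsMeasure

/-- The Gibbs measure `exp (-ψ) dx` of a potential `ψ`, not necessarily normalized. -/
def gibbsMeasure {E : Type*} [MeasureSpace E] (ψ : E → ℝ) : Measure E :=
  volume.withDensity fun x => ENNReal.ofReal (exp (-ψ x))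

variable {E : Type*} [MeasureSpace E] {ψ f : E → ℝ}

theorem integral_gibbsMeasure (hψ : Measurable ψ) :
    ∫ x, f x ∂gibbsMeasure ψ = ∫ x, f x * exp (-ψ x) := by
  rw [gibbsMeasure, integral_withDensity_eq_integral_toReal_smul (by fun_prop) (by simp)]
  simp only [ENNReal.toReal_ofReal (exp_pos _).le, smul_eq_mul, mul_comm]

theorem integrable_gibbsMeasure_iff (hψ : Measurable ψ) :
    Integrable f (gibbsMeasure ψ) ↔ Integrable (fun x => f x * exp (-ψ x)) := by
  rw [gibbsMeasure, integrable_withDensity_iff (by fun_prop) (by simp)]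
  simp only [ENNReal.toReal_ofReal (exp_pos _).le]

theorem gibbsMeasure_absolutelyContinuous (ψ : E → ℝ) : gibbsMeasure ψ ≪ volume :=
  withDensity_absolutelyContinuous _ _

theorem absolutelyContinuous_gibbsMeasure (hψ : Measurable ψ) : volume ≪ gibbsMeasure ψ :=
  withDensity_absolutelyContinuous' (by fun_prop) (.of_forall fun x => by simp [exp_pos])

theorem isLocallyFiniteMeasure_gibbsMeasure [TopologicalSpace E] [OpensMeasurableSpace E]
    [IsLocallyFiniteMeasure (volume : Measure E)] (hψ : Continuous ψ) :
    IsLocallyFiniteMeasure (gibbsMeasure ψ) :=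
  IsLocallyFiniteMeasure.withDensity_ofReal (by fun_prop)

theorem memLp_two_gibbsMeasure_iff (hψ : Measurable ψ) (hf : AEStronglyMeasurable f volume) :
    MemLp f 2 (gibbsMeasure ψ) ↔ MemLp (fun x => f x * exp (-ψ x / 2)) 2 volume := by
  have hw : Measurable fun x => exp (-ψ x / 2) := by fun_prop
  rw [memLp_two_iff_integrable_sq (hf.mono_ac (gibbsMeasure_absolutelyContinuous ψ)),
    memLp_two_iff_integrable_sq (f := fun x => f x * _) (hf.mul hw.aestronglyMeasurable),
    integrable_gibbsMeasure_iff hψ]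
  simp only [mul_pow, ← exp_nat_mul, Nat.cast_ofNat, mul_div_cancel₀ _ (two_ne_zero (α := ℝ))]

end GibbsMeasure

section IntegrationByParts

variable {E : Type*} [NormedAddCommGroup E] [InnerProductSpace ℝ E] [FiniteDimensional ℝ E]
  [MeasurableSpace E] [BorelSpace E] {K : NNReal} {ψ f w : E → ℝ}

theorem integral_mul_dirDeriv_of_lipschitzWith (hf : LipschitzWith K f) (hw : IsTestFun w)
    (v : E) : ∫ x, f x * dirDeriv v w x = -∫ x, dirDeriv v f x * w x := by
  obtain ⟨K', hK'⟩ := hw.exists_lipschitzWith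
  have hf_eq : ∫ x, dirDeriv v f x * w x = ∫ x, lineDeriv ℝ f x v * w x := by
    refine integral_congr_ae ?_
    filter_upwards [hf.ae_differentiableAt (μ := volume)] with x hx
    rw [hx.lineDeriv_eq_fderiv, dirDeriv]
  rw [hf_eq, hf.integral_lineDeriv_mul_eq hK' hw.hasCompactSupport, ← integral_neg]
  refine integral_congr_ae (.of_forall fun x => ?_)
  simp only [(hw.differentiable x).lineDeriv_eq_fderiv, map_neg, dirDeriv]
  ring

theorem integral_mul_dirDeriv_gibbsMeasure (hψ : ContDiff ℝ ∞ ψ) (hf : LipschitzWith K f)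
    (hw : IsTestFun w) (v : E) :
    ∫ x, f x * (dirDeriv v w x - dirDeriv v ψ x * w x) ∂gibbsMeasure ψ =
      -∫ x, dirDeriv v f x * w x ∂gibbsMeasure ψ := by
  have hflux := integral_mul_dirDeriv_of_lipschitzWith hf (hw.mul_right hψ.neg.exp) v
  simp only [dirDeriv_mul_exp_neg (hψ.differentiable (by simp)) hw.differentiable, ← mul_assoc]
    at hflux
  have hψm : Measurable ψ := hψ.continuous.measurable
  rw [integral_gibbsMeasure hψm, integral_gibbsMeasure hψm, hflux]

end IntegrationByParts

section Gradient

variable {E : Type*} [NormedAddCommGroup E] [InnerProductSpace ℝ E] [CompleteSpace E]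
  {f g : E → ℝ} {x : E}

theorem norm_gradient_eq_norm_fderiv (f : E → ℝ) (x : E) : ‖gradient f x‖ = ‖fderiv ℝ f x‖ := by
  simp [gradient]

theorem gradient_mul (hf : DifferentiableAt ℝ f x) (hg : DifferentiableAt ℝ g x) :
    gradient (fun y => f y * g y) x = f x • gradient g x + g x • gradient f x := by
  simp [gradient, fderiv_fun_mul hf hg]

theorem gradient_of_notMem_tsupport (hx : x ∉ tsupport f) : gradient f x = 0 := by
  simp [gradient, fderiv_of_notMem_tsupport ℝ hx]

theorem continuous_gradient (hf : ContDiff ℝ ∞ f) : Continuous (gradient f) :=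
  (InnerProductSpace.toDual ℝ E).symm.continuous.comp (hf.continuous_fderiv (by simp))

end Gradient

local notation "∂[" i "]" => dirDeriv (EuclideanSpace.single i (1 : ℝ))

section Coordinates

variable {n : ℕ}

theorem gradient_apply (u : Euc n → ℝ) (x : Euc n) (i : Fin n) :
    gradient u x i = ∂[i] u x := by
  have h : ⟪gradient u x, EuclideanSpace.single i 1⟫ = ∂[i] u x := inner_gradient_left
  rw [← h, EuclideanSpace.inner_single_right]
  simp

theorem inner_gradient_gradient (u w : Euc n → ℝ) (x : Euc n) :
    ⟪gradient u x, gradient w x⟫ = ∑ i, ∂[i] u x * ∂[i] w x := by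
  rw [PiLp.inner_apply]
  simp [gradient_apply, mul_comm]

theorem norm_gradient_sq (u : Euc n → ℝ) (x : Euc n) :
    ‖gradient u x‖ ^ 2 = ∑ i, ∂[i] u x ^ 2 := by
  simp only [EuclideanSpace.real_norm_sq_eq, gradient_apply]

theorem lap_eq_sum {u : Euc n → ℝ} (hu : ContDiff ℝ 2 u) (x : Euc n) :
    lap u x = ∑ i, ∂[i] (∂[i] u) x := by
  simp only [lap, iteratedFDeriv_two_apply, dirDeriv_dirDeriv hu, Matrix.cons_val_zero,
    Matrix.cons_val_one]

end Coordinates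

section Generator

variable {n : ℕ} {ψ u w χ : Euc n → ℝ}

theorem Lop_eq_sum (ψ : Euc n → ℝ) (hu : ContDiff ℝ ∞ u) (x : Euc n) :
    Lop ψ u x = ∑ i, (∂[i] (∂[i] u) x -
      ∂[i] ψ x * ∂[i] u x) := by
  rw [Lop, lap_eq_sum (hu.of_le ENat.LEInfty.out), inner_gradient_gradient, Finset.sum_sub_distrib]

theorem contDiff_Lop (hψ : ContDiff ℝ ∞ ψ) (hu : ContDiff ℝ ∞ u) : ContDiff ℝ ∞ (Lop ψ u) := by
  rw [funext (Lop_eq_sum ψ hu)]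
  exact ContDiff.sum fun i _ => (contDiff_dirDeriv (contDiff_dirDeriv hu _) _).sub
    ((contDiff_dirDeriv hψ _).mul (contDiff_dirDeriv hu _))

theorem Lop_of_notMem_tsupport (ψ : Euc n → ℝ) (hu : ContDiff ℝ ∞ u) {x : Euc n}
    (hx : x ∉ tsupport u) : Lop ψ u x = 0 := by
  rw [Lop_eq_sum ψ hu]
  refine Finset.sum_eq_zero fun i _ => ?_
  rw [dirDeriv_of_notMem_tsupport fun h => hx (tsupport_dirDeriv_subset _ _ h),
    dirDeriv_of_notMem_tsupport hx, mul_zero, sub_zero]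

theorem IsTestFun.Lop (hu : IsTestFun u) (hψ : ContDiff ℝ ∞ ψ) : IsTestFun (Lop ψ u) :=
  ⟨contDiff_Lop hψ hu.contDiff, .of_support_subset_isCompact hu.hasCompactSupport fun _ hx =>
    not_imp_comm.1 (Lop_of_notMem_tsupport ψ hu.contDiff) hx⟩

theorem Lop_add (ψ : Euc n → ℝ) (hu : ContDiff ℝ ∞ u) (hw : ContDiff ℝ ∞ w) :
    Lop ψ (u + w) = Lop ψ u + Lop ψ w := by
  ext x
  have hsum : ∀ i, ∂[i] (u + w) = fun x => ∂[i] u x + ∂[i] w x :=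
    fun i => dirDeriv_add (hu.differentiable (by simp)) (hw.differentiable (by simp)) _
  rw [Pi.add_apply, Lop_eq_sum ψ (u := u + w) (hu.add hw), Lop_eq_sum ψ hu, Lop_eq_sum ψ hw,
    ← Finset.sum_add_distrib]
  refine Finset.sum_congr rfl fun i _ => ?_
  rw [hsum, dirDeriv_add ((contDiff_dirDeriv hu _).differentiable (by simp))
    ((contDiff_dirDeriv hw _).differentiable (by simp))]
  ring

theorem Lop_const_smul (ψ : Euc n → ℝ) (hu : ContDiff ℝ ∞ u) (c : ℝ) :
    Lop ψ (c • u) = c • Lop ψ u := by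
  ext x
  have hsmul : ∀ i, ∂[i] (c • u) = fun x => c * ∂[i] u x :=
    fun i => dirDeriv_const_mul (hu.differentiable (by simp)) c _
  rw [Pi.smul_apply, smul_eq_mul, Lop_eq_sum ψ (u := c • u) (contDiff_const.smul hu),
    Lop_eq_sum ψ hu, Finset.mul_sum]
  refine Finset.sum_congr rfl fun i _ => ?_
  rw [hsmul, dirDeriv_const_mul ((contDiff_dirDeriv hu _).differentiable (by simp))]
  ring

theorem Lop_mul (ψ : Euc n → ℝ) (hu : ContDiff ℝ ∞ u) (hw : ContDiff ℝ ∞ w) (x : Euc n) :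
    Lop ψ (fun y => u y * w y) x =
      u x * Lop ψ w x + w x * Lop ψ u x + 2 * ⟪gradient u x, gradient w x⟫ := by
  have hdiff : ∀ {f : Euc n → ℝ}, ContDiff ℝ ∞ f → Differentiable ℝ f :=
    fun hf => hf.differentiable (by simp)
  have hu' i : Differentiable ℝ (∂[i] u) := hdiff (contDiff_dirDeriv hu _)
  have hw' i : Differentiable ℝ (∂[i] w) := hdiff (contDiff_dirDeriv hw _)
  rw [Lop_eq_sum ψ (hu.mul hw), Lop_eq_sum ψ hu, Lop_eq_sum ψ hw, inner_gradient_gradient,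
    Finset.mul_sum, Finset.mul_sum, Finset.mul_sum, ← Finset.sum_add_distrib,
    ← Finset.sum_add_distrib]
  refine Finset.sum_congr rfl fun i _ => ?_
  rw [dirDeriv_mul (hdiff hu) (hdiff hw), dirDeriv_add ((hdiff hu).fun_mul (hw' i))
    ((hdiff hw).fun_mul (hu' i)), dirDeriv_mul (hdiff hu) (hw' i), dirDeriv_mul (hdiff hw) (hu' i)]
  ring

theorem integral_mul_Lop (hψ : ContDiff ℝ ∞ ψ) {f : Euc n → ℝ} {K : NNReal}
    (hf : LipschitzWith K f) (hu : IsTestFun u) :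
    ∫ x, f x * Lop ψ u x ∂gibbsMeasure ψ =
      -∫ x, ⟪gradient f x, gradient u x⟫ ∂gibbsMeasure ψ := by
  have := isLocallyFiniteMeasure_gibbsMeasure hψ.continuous
  simp only [Lop_eq_sum ψ hu.contDiff, Finset.mul_sum, inner_gradient_gradient]
  rw [integral_finsetSum _ fun i _ => ?_, integral_finsetSum _ fun i _ => ?_,
    ← Finset.sum_neg_distrib]
  · exact Finset.sum_congr rfl fun i _ =>
      integral_mul_dirDeriv_gibbsMeasure hψ hf (hu.dirDeriv _) _
  · exact integrable_dirDeriv_mul_of_lipschitzWith hf (hu.dirDeriv _) _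
  · have htest : Integrable (fun x => (∂[i] (∂[i] u) x -
        ∂[i] u x * ∂[i] ψ x) * f x) (gibbsMeasure ψ) := by
      simp only [sub_mul, mul_assoc]
      exact (((hu.dirDeriv _).dirDeriv _).integrable_mul hf.continuous).sub
        ((hu.dirDeriv _).integrable_mul
          ((contDiff_dirDeriv hψ _).continuous.mul hf.continuous))
    exact htest.congr (.of_forall fun x => by ring)

theorem integral_norm_gradient_sq (hψ : ContDiff ℝ ∞ ψ) (hu : IsTestFun u) :
    ∫ x, ‖gradient u x‖ ^ 2 ∂gibbsMeasure ψ = -∫ x, u x * Lop ψ u x ∂gibbsMeasure ψ := by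
  obtain ⟨K, hK⟩ := hu.exists_lipschitzWith
  simp only [integral_mul_Lop hψ hK hu, neg_neg, real_inner_self_eq_norm_sq]

theorem map_gradient_eq_sum (ℓ : Euc n →L[ℝ] ℝ) (u : Euc n → ℝ) (x : Euc n) :
    ℓ (gradient u x) = ∑ i, ∂[i] u x * ℓ (EuclideanSpace.single i 1) := by
  conv_lhs => rw [← (EuclideanSpace.basisFun (Fin n) ℝ).sum_repr (gradient u x), map_sum]
  simp [gradient_apply]

theorem dirDeriv_Lop (hψ : ContDiff ℝ ∞ ψ) (hu : ContDiff ℝ ∞ u) (v x : Euc n) :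
    dirDeriv v (Lop ψ u) x =
      Lop ψ (dirDeriv v u) x - fderiv ℝ (fderiv ℝ ψ) x v (gradient u x) := by
  have hd : ∀ {f : Euc n → ℝ}, ContDiff ℝ ∞ f → ∀ v, Differentiable ℝ (dirDeriv v f) :=
    fun hf v => (contDiff_dirDeriv hf v).differentiable (by simp)
  have hcomm : ∀ {f : Euc n → ℝ}, ContDiff ℝ ∞ f → ∀ i,
      dirDeriv v (∂[i] f) = ∂[i] (dirDeriv v f) :=
    fun hf i => dirDeriv_comm (hf.of_le ENat.LEInfty.out) _ _
  rw [funext (Lop_eq_sum ψ hu), Lop_eq_sum ψ (contDiff_dirDeriv hu v), map_gradient_eq_sum,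
    dirDeriv_sum _ fun i _ =>
      (hd (contDiff_dirDeriv hu _) _).fun_sub ((hd hψ _).fun_mul (hd hu _)),
    ← Finset.sum_sub_distrib]
  refine Finset.sum_congr rfl fun i _ => ?_
  rw [dirDeriv_sub (hd (contDiff_dirDeriv hu _) _) ((hd hψ _).fun_mul (hd hu _)),
    dirDeriv_mul (hd hψ _) (hd hu _), hcomm (contDiff_dirDeriv hu _), hcomm hu,
    ← dirDeriv_dirDeriv (hψ.of_le ENat.LEInfty.out)]
  ring

theorem inner_gradient_Lop (hψ : ContDiff ℝ ∞ ψ) (hu : ContDiff ℝ ∞ u) (x : Euc n) :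
    ⟪gradient (Lop ψ u) x, gradient u x⟫ =
      ∑ j, ∂[j] u x * Lop ψ (∂[j] u) x -
        fderiv ℝ (fderiv ℝ ψ) x (gradient u x) (gradient u x) := by
  have hess := map_gradient_eq_sum ((fderiv ℝ (fderiv ℝ ψ) x).flip (gradient u x)) u x
  simp only [ContinuousLinearMap.flip_apply] at hess
  rw [hess, inner_gradient_gradient, ← Finset.sum_sub_distrib]
  refine Finset.sum_congr rfl fun j _ => ?_
  rw [dirDeriv_Lop hψ hu]
  ring

theorem integrable_hessian_gradient (hψ : ContDiff ℝ ∞ ψ) (hu : IsTestFun u) :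
    Integrable (fun x => fderiv ℝ (fderiv ℝ ψ) x (gradient u x) (gradient u x))
      (gibbsMeasure ψ) := by
  have := isLocallyFiniteMeasure_gibbsMeasure hψ.continuous
  have hcont : Continuous fun x => fderiv ℝ (fderiv ℝ ψ) x (gradient u x) (gradient u x) :=
    (((hψ.fderiv_right (m := ∞) (by simp)).continuous_fderiv (by simp)).clm_apply
      (continuous_gradient hu.contDiff)).clm_apply (continuous_gradient hu.contDiff)
  refine hcont.integrable_of_hasCompactSupport (.of_support_subset_isCompact
    hu.hasCompactSupport fun x hx => not_imp_comm.1 (fun h => ?_) hx)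
  simp [gradient_of_notMem_tsupport h]

theorem integral_Lop_sq (hψ : ContDiff ℝ ∞ ψ) (hu : IsTestFun u) :
    ∫ x, Lop ψ u x ^ 2 ∂gibbsMeasure ψ =
      ∑ j, ∫ x, ‖gradient (∂[j] u) x‖ ^ 2 ∂gibbsMeasure ψ +
        ∫ x, fderiv ℝ (fderiv ℝ ψ) x (gradient u x) (gradient u x) ∂gibbsMeasure ψ := by
  have := isLocallyFiniteMeasure_gibbsMeasure hψ.continuous
  obtain ⟨K, hK⟩ := (hu.Lop hψ).exists_lipschitzWith
  have hterm j : Integrable (fun x => ∂[j] u x * Lop ψ (∂[j] u) x) (gibbsMeasure ψ) :=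
    (hu.dirDeriv _).integrable_mul ((hu.dirDeriv _).Lop hψ).continuous
  simp only [sq (Lop ψ u _)]
  rw [integral_mul_Lop hψ hK hu]
  simp only [inner_gradient_Lop hψ hu.contDiff]
  rw [integral_sub (integrable_finsetSum _ fun j _ => hterm j) (integrable_hessian_gradient hψ hu),
    integral_finsetSum _ fun j _ => hterm j]
  simp only [integral_norm_gradient_sq hψ (hu.dirDeriv _), Finset.sum_neg_distrib]
  ring

theorem mul_mul_Lop_mul (ψ : Euc n → ℝ) (hχ : ContDiff ℝ ∞ χ) (hw : ContDiff ℝ ∞ w)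
    (x : Euc n) :
    χ x * w x * Lop ψ (fun y => χ y * w y) x =
      (χ x * w x ^ 2 * Lop ψ χ x + ⟪gradient (fun y => χ y * w y ^ 2) x, gradient χ x⟫) -
        (w x ^ 2 * ‖gradient χ x‖ ^ 2 - χ x ^ 2 * (w x * Lop ψ w x)) := by
  have hχx : DifferentiableAt ℝ χ x := hχ.differentiable (by simp) x
  have hwx : DifferentiableAt ℝ w x := hw.differentiable (by simp) x
  have hgrad : gradient (fun y => χ y * w y ^ 2) x =
      (2 * χ x * w x) • gradient w x + w x ^ 2 • gradient χ x := by
    simp only [pow_two]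
    rw [gradient_mul hχx (hwx.fun_mul hwx), gradient_mul hwx hwx, ← add_smul, smul_smul]
    ring_nf
  rw [Lop_mul ψ hχ hw, hgrad, inner_add_left, real_inner_smul_left,
    real_inner_smul_left, real_inner_self_eq_norm_sq, real_inner_comm (gradient χ x)]
  ring

theorem integral_norm_gradient_mul_sq (hψ : ContDiff ℝ ∞ ψ) (hχ : IsTestFun χ)
    (hw : ContDiff ℝ ∞ w) :
    ∫ x, ‖gradient (fun y => χ y * w y) x‖ ^ 2 ∂gibbsMeasure ψ =
      ∫ x, w x ^ 2 * ‖gradient χ x‖ ^ 2 - χ x ^ 2 * (w x * Lop ψ w x) ∂gibbsMeasure ψ := by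
  have := isLocallyFiniteMeasure_gibbsMeasure hψ.continuous
  have hχw2 : IsTestFun fun x => χ x * w x ^ 2 := hχ.mul_right (hw.pow 2)
  obtain ⟨K, hK⟩ := hχw2.exists_lipschitzWith
  have hi₁ : Integrable (fun x => χ x * w x ^ 2 * Lop ψ χ x) (gibbsMeasure ψ) :=
    hχw2.integrable_mul (hχ.Lop hψ).continuous
  have hi₂ : Integrable (fun x => ⟪gradient (fun y => χ y * w y ^ 2) x, gradient χ x⟫)
      (gibbsMeasure ψ) := by
    simp only [inner_gradient_gradient]
    exact integrable_finsetSum _ fun i _ => (hχw2.dirDeriv _).integrable_mul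
      (hχ.dirDeriv _).continuous
  have hi₃ : Integrable (fun x => w x ^ 2 * ‖gradient χ x‖ ^ 2 - χ x ^ 2 * (w x * Lop ψ w x))
      (gibbsMeasure ψ) := by
    simp only [norm_gradient_sq, Finset.mul_sum]
    refine (integrable_finsetSum _ fun i _ => ?_).sub ?_
    · exact (((hχ.dirDeriv (EuclideanSpace.single i 1)).mul_right
        (contDiff_dirDeriv hχ.contDiff _)).integrable_mul (hw.pow 2).continuous).congr
        (.of_forall fun x => by ring)
    · exact ((hχ.mul_right hχ.contDiff).integrable_mul
        (hw.mul (contDiff_Lop hψ hw)).continuous).congr (.of_forall fun x => by ring)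
  rw [integral_norm_gradient_sq hψ (hχ.mul_right hw),
    integral_congr_ae (.of_forall (mul_mul_Lop_mul ψ hχ.contDiff hw)),
    integral_sub (hi₁.fun_add hi₂) hi₃, integral_add hi₁ hi₂, integral_mul_Lop hψ hK hχ]
  ring

end Generator

section Mollification

variable {E : Type*} [NormedAddCommGroup E] [InnerProductSpace ℝ E] [FiniteDimensional ℝ E]
  [MeasurableSpace E] [BorelSpace E] {p k g : E → ℝ}

/-- The convolution of `k` with a kernel `p`. -/
def mollify (p k : E → ℝ) (x : E) : ℝ := ∫ y, k y * p (x - y)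

theorem mollify_eq_convolution (p k : E → ℝ) :
    mollify p k = k ⋆[ContinuousLinearMap.mul ℝ ℝ] p :=
  rfl

theorem mollify_eq_lsmul_convolution (p k : E → ℝ) :
    mollify p k = p ⋆[ContinuousLinearMap.lsmul ℝ ℝ] k := by
  ext x
  simp only [convolution_lsmul_swap, mollify, smul_eq_mul, mul_comm]

theorem integrable_mollify_integrand (hp : Continuous p) (hpc : HasCompactSupport p)
    (hk : LocallyIntegrable k) (x : E) : Integrable fun y => k y * p (x - y) :=
  hpc.convolutionExists_right (ContinuousLinearMap.mul ℝ ℝ) hk hp x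

theorem continuous_mollify (hp : Continuous p) (hpc : HasCompactSupport p)
    (hk : LocallyIntegrable k) : Continuous (mollify p k) :=
  hpc.continuous_convolution_right (ContinuousLinearMap.mul ℝ ℝ) hk hp

theorem contDiff_mollify (hp : IsTestFun p) (hk : LocallyIntegrable k) :
    ContDiff ℝ ∞ (mollify p k) :=
  hp.hasCompactSupport.contDiff_convolution_right (ContinuousLinearMap.mul ℝ ℝ) hk hp.contDiff

theorem dirDeriv_mollify (hp : IsTestFun p) (hk : LocallyIntegrable k) (v : E) :
    dirDeriv v (mollify p k) = mollify (dirDeriv v p) k := by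
  ext x
  have hp₁ : ContDiff ℝ 1 p := hp.contDiff.of_le ENat.LEInfty.out
  rw [mollify_eq_convolution, dirDeriv, (hp.hasCompactSupport.hasFDerivAt_convolution_right
    (ContinuousLinearMap.mul ℝ ℝ) hk hp₁ x).fderiv, convolution_precompR_apply _ hk
    (hp.hasCompactSupport.fderiv ℝ) (hp₁.continuous_fderiv one_ne_zero)]
  rfl

theorem integral_mul_dirDeriv_comp_const_sub (hp : IsTestFun p) (hk : LocallyIntegrable k)
    (v x : E) : ∫ y, k y * dirDeriv v (fun y => p (x - y)) y = -dirDeriv v (mollify p k) x := by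
  simp only [dirDeriv_comp_const_sub hp.differentiable, mul_neg, integral_neg,
    dirDeriv_mollify hp hk, mollify]

theorem isTestFun_normed (φ : ContDiffBump (0 : E)) : IsTestFun (φ.normed volume) :=
  ⟨φ.contDiff_normed, φ.hasCompactSupport_normed⟩

theorem exists_contDiffBump_tendsto_zero (E : Type*) [NormedAddCommGroup E] :
    ∃ φ : ℕ → ContDiffBump (0 : E), Filter.Tendsto (fun m => (φ m).rOut) .atTop (nhds 0) ∧
      ∀ m, (φ m).rOut ≤ 2 * (φ m).rIn := by
  refine ⟨fun m => ⟨1 / (m + 1), 2 * (1 / (m + 1)), by positivity,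
    lt_two_mul_self (by positivity)⟩, ?_, fun m => le_rfl⟩
  simpa using (tendsto_one_div_add_atTop_nhds_zero_nat (𝕜 := ℝ)).const_mul 2

theorem ae_eq_const_of_integral_mul_dirDeriv_eq_zero {h : E → ℝ} (hh : LocallyIntegrable h)
    (hweak : ∀ w, IsTestFun w → ∀ v, ∫ x, h x * dirDeriv v w x = 0) :
    ∃ c : ℝ, h =ᵐ[volume] fun _ => c := by
  obtain ⟨φ, hφ, hφ'⟩ := exists_contDiffBump_tendsto_zero E
  have hconst m x : mollify ((φ m).normed volume) h x = mollify ((φ m).normed volume) h 0 := by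
    have hp := isTestFun_normed (φ m)
    refine is_const_of_fderiv_eq_zero (𝕜 := ℝ)
      ((contDiff_mollify hp hh).differentiable (by simp)) (fun y => ?_) x 0
    ext v
    have := integral_mul_dirDeriv_comp_const_sub hp hh v y
    rw [hweak _ (hp.comp_const_sub y)] at this
    exact (neg_eq_zero.1 this.symm)
  have hlim : ∀ᵐ x, Filter.Tendsto (fun m => mollify ((φ m).normed volume) h 0) .atTop
      (nhds (h x)) := by
    filter_upwards [ContDiffBump.ae_convolution_tendsto_right_of_locallyIntegrable (μ := volume)
      hφ (.of_forall hφ') hh] with x hx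
    simpa only [← hconst _ x, mollify_eq_lsmul_convolution] using hx
  obtain ⟨x₀, hx₀⟩ := hlim.exists
  exact ⟨h x₀, hlim.mono fun x hx => tendsto_nhds_unique hx hx₀⟩

theorem sq_mollify_le (hp : Continuous p) (hpc : HasCompactSupport p) (hp₀ : ∀ x, 0 ≤ p x)
    (hp₁ : ∫ x, p x = 1) (hk : MemLp k 2) (x : E) :
    mollify p k x ^ 2 ≤ mollify p (fun y => k y ^ 2) x := by
  have hi₁ := integrable_mollify_integrand hp hpc (hk.locallyIntegrable one_le_two) x
  have hi₂ := integrable_mollify_integrand hp hpc hk.integrable_sq.locallyIntegrable x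
  have hi₀ : Integrable fun y => p (x - y) :=
    (hp.integrable_of_hasCompactSupport hpc).comp_sub_left x
  have hvar : 0 ≤ ∫ y, (k y - mollify p k x) ^ 2 * p (x - y) :=
    integral_nonneg fun y => mul_nonneg (sq_nonneg _) (hp₀ _)
  have hexpand y : (k y - mollify p k x) ^ 2 * p (x - y) =
      k y ^ 2 * p (x - y) - 2 * mollify p k x * (k y * p (x - y)) +
        mollify p k x ^ 2 * p (x - y) := by ring
  simp only [hexpand] at hvar
  have hi₃ : Integrable fun y =>
      k y ^ 2 * p (x - y) - 2 * mollify p k x * (k y * p (x - y)) :=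
    hi₂.sub (hi₁.const_mul _)
  rw [integral_add hi₃ (hi₀.const_mul _), integral_sub hi₂ (hi₁.const_mul _),
    integral_const_mul, integral_const_mul, integral_sub_left_eq_self p, hp₁] at hvar
  change 0 ≤ mollify p (fun y => k y ^ 2) x - 2 * mollify p k x * mollify p k x + _ at hvar
  linarith

theorem locallyIntegrable_abs (hk : LocallyIntegrable k) :
    LocallyIntegrable fun y => |k y| :=
  hk.mono hk.aestronglyMeasurable.norm (.of_forall fun y => (abs_abs (k y)).le)

theorem abs_mollify_le (hp : Continuous p) (hpc : HasCompactSupport p) (hp₀ : ∀ x, 0 ≤ p x)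
    (hk : LocallyIntegrable k) (x : E) : |mollify p k x| ≤ mollify p (fun y => |k y|) x := by
  refine norm_integral_le_of_norm_le (f := fun y => k y * p (x - y))
    (integrable_mollify_integrand hp hpc (locallyIntegrable_abs hk) x) (.of_forall fun y => ?_)
  rw [norm_mul, norm_of_nonneg (hp₀ _), norm_eq_abs]

theorem integrable_mollify (hp : Integrable p) (hk : Integrable k) : Integrable (mollify p k) :=
  hk.integrable_convolution (ContinuousLinearMap.mul ℝ ℝ) hp

theorem integral_mollify (hp : Integrable p) (hk : Integrable k) :
    ∫ x, mollify p k x = (∫ x, k x) * ∫ x, p x :=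
  integral_convolution (ContinuousLinearMap.mul ℝ ℝ) hk hp

theorem hasCompactSupport_mollify (hpc : HasCompactSupport p)
    (hgc : HasCompactSupport g) : HasCompactSupport (mollify p g) :=
  hgc.convolution (ContinuousLinearMap.mul ℝ ℝ) hpc

theorem integrable_mollify_mul_prod (hp : Continuous p) (hpc : HasCompactSupport p)
    (hk : LocallyIntegrable k) (hg : Continuous g) (hgc : HasCompactSupport g) :
    Integrable (fun z : E × E => k z.2 * (p (z.1 - z.2) * g z.1)) (volume.prod volume) := by
  refine (integrable_prod_iff' ?_).2 ⟨.of_forall fun y => ?_, ?_⟩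
  · exact hk.aestronglyMeasurable.comp_snd.mul (by fun_prop)
  · have hcont : Continuous fun x => p (x - y) * g x := by fun_prop
    exact (hcont.integrable_of_hasCompactSupport hgc.mul_left).const_mul (k y)
  · have hq : Continuous fun x => |p (-x)| := by fun_prop
    have hqc : HasCompactSupport fun x => |p (-x)| := (hpc.comp_homeomorph (Homeomorph.neg E)).norm
    refine ((locallyIntegrable_abs hk).integrable_smul_right_of_hasCompactSupport
      (continuous_mollify hq hqc hg.abs.locallyIntegrable)
      (hasCompactSupport_mollify hqc hgc.norm)).congr (.of_forall fun y => ?_)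
    simp only [mollify, smul_eq_mul, norm_mul, norm_eq_abs, integral_const_mul, neg_sub]
    congr 1
    exact integral_congr_ae (.of_forall fun x => mul_comm _ _)

theorem integral_mollify_mul (hp : Continuous p) (hpc : HasCompactSupport p)
    (hp_even : ∀ x, p (-x) = p x) (hk : LocallyIntegrable k) (hg : Continuous g)
    (hgc : HasCompactSupport g) :
    ∫ x, mollify p k x * g x = ∫ y, k y * mollify p g y := by
  have hsymm x y : p (x - y) = p (y - x) := by rw [← hp_even, neg_sub]
  calc ∫ x, mollify p k x * g x = ∫ x, ∫ y, k y * (p (x - y) * g x) := by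
        simp only [mollify, ← integral_mul_const, mul_assoc]
    _ = ∫ y, ∫ x, k y * (p (x - y) * g x) :=
        integral_integral_swap (integrable_mollify_mul_prod hp hpc hk hg hgc)
    _ = ∫ y, k y * mollify p g y := by
        simp only [integral_const_mul, mollify, hsymm _ (_ : E), mul_comm (g _)]

theorem abs_mollify_le_of_abs_le (hp₀ : ∀ x, 0 ≤ p x) (hp₁ : ∫ x, p x = 1)
    (hp : Integrable p) {C : ℝ} (hg : ∀ x, |g x| ≤ C) (x : E) : |mollify p g x| ≤ C := by
  have h := norm_integral_le_of_norm_le (f := fun y => g y * p (x - y))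
    ((hp.comp_sub_left x).const_mul C) (.of_forall fun y => ?_)
  · rwa [integral_const_mul, integral_sub_left_eq_self p, hp₁, mul_one] at h
  · rw [norm_mul, norm_of_nonneg (hp₀ _), norm_eq_abs]
    exact mul_le_mul_of_nonneg_right (hg y) (hp₀ _)

theorem dist_lt_rOut_of_normed_ne_zero {φ : ContDiffBump (0 : E)} {x y : E}
    (h : φ.normed volume (x - y) ≠ 0) : dist x y < φ.rOut := by
  rw [← Function.mem_support, φ.support_normed_eq, mem_ball_zero_iff] at h
  rwa [dist_eq_norm]

theorem mollify_normed_eq_zero {φ : ContDiffBump (0 : E)} {r : ℝ} (hφ : φ.rOut ≤ r) {x : E}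
    (hx : x ∉ Metric.cthickening r (tsupport g)) : mollify (φ.normed volume) g x = 0 := by
  refine integral_eq_zero_of_ae (.of_forall fun y => by_contra fun h => hx ?_)
  obtain ⟨hg, hp⟩ := mul_ne_zero_iff.1 h
  exact Metric.mem_cthickening_of_dist_le _ y _ _ (subset_tsupport g hg)
    ((dist_lt_rOut_of_normed_ne_zero hp).le.trans hφ)

theorem tendsto_integral_mollify_mul {φ : ℕ → ContDiffBump (0 : E)}
    (hφ : Filter.Tendsto (fun m => (φ m).rOut) .atTop (nhds 0)) (hk : LocallyIntegrable k)
    (hg : Continuous g) (hgc : HasCompactSupport g) :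
    Filter.Tendsto (fun m => ∫ x, mollify ((φ m).normed volume) k x * g x) .atTop
      (nhds (∫ x, k x * g x)) := by
  obtain ⟨C, hC⟩ := hgc.exists_bound_of_continuous hg
  have hadj m : ∫ x, mollify ((φ m).normed volume) k x * g x =
      ∫ y, k y * mollify ((φ m).normed volume) g y :=
    integral_mollify_mul (isTestFun_normed _).continuous (isTestFun_normed _).hasCompactSupport
      (φ m).normed_neg hk hg hgc
  simp only [hadj]
  set s := Metric.cthickening 1 (tsupport g)
  have hs : IsCompact s := hgc.isCompact.cthickening
  refine tendsto_integral_filter_of_dominated_convergence (s.indicator fun y => |k y| * C)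
    (.of_forall fun m => hk.aestronglyMeasurable.mul (continuous_mollify
      (isTestFun_normed _).continuous (isTestFun_normed _).hasCompactSupport
      hg.locallyIntegrable).aestronglyMeasurable) ?_
    ((integrable_indicator_iff hs.measurableSet).2
      (((locallyIntegrable_abs hk).integrableOn_isCompact hs).mul_const C)) ?_
  · filter_upwards [hφ.eventually_le_const one_pos] with m hm
    refine .of_forall fun y => ?_
    by_cases hy : y ∈ s
    · rw [Set.indicator_of_mem hy, norm_mul]
      exact mul_le_mul_of_nonneg_left (abs_mollify_le_of_abs_le (φ m).nonneg_normed
        (φ m).integral_normed (isTestFun_normed _).integrable hC y) (abs_nonneg _)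
    · simp [Set.indicator_of_notMem hy, mollify_normed_eq_zero hm hy]
  · refine .of_forall fun y => .const_mul _ ?_
    simp only [mollify_eq_lsmul_convolution]
    exact ContDiffBump.convolution_tendsto_right_of_continuous hφ hg y

end Mollification

section Schrodinger

variable {n : ℕ} {p k u w V : Euc n → ℝ}

/-- `k` is a distributional solution of the Schrödinger equation `Δk = Vk`. -/
def IsWeakSchrodingerSolution (V k : Euc n → ℝ) : Prop :=
  ∀ w, IsTestFun w → ∫ x, k x * (lap w x - V x * w x) = 0

theorem Lop_zero (u : Euc n → ℝ) : Lop 0 u = lap u := by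
  ext x
  simp [Lop, gradient]

theorem IsTestFun.lap (hu : IsTestFun u) : IsTestFun (lap u) :=
  Lop_zero u ▸ hu.Lop contDiff_const

theorem lap_comp_const_sub (hp : ContDiff ℝ ∞ p) (x y : Euc n) :
    lap (fun y => p (x - y)) y = lap p (x - y) := by
  have hd {f : Euc n → ℝ} (hf : ContDiff ℝ ∞ f) : Differentiable ℝ f := hf.differentiable (by simp)
  have hpx : ContDiff ℝ ∞ fun y => p (x - y) := hp.comp (contDiff_const.sub contDiff_id)
  rw [lap_eq_sum (hpx.of_le ENat.LEInfty.out), lap_eq_sum (hp.of_le ENat.LEInfty.out)]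
  refine Finset.sum_congr rfl fun i _ => ?_
  have hneg : (fun y => -∂[i] p (x - y)) = fun y => (-(∂[i] p)) (x - y) := rfl
  rw [dirDeriv_comp_const_sub (hd hp), hneg,
    dirDeriv_comp_const_sub (u := -(∂[i] p)) (hd (contDiff_dirDeriv hp _).neg)]
  simp [dirDeriv, fderiv_neg]

theorem lap_mollify_eq_mollify_lap (hp : IsTestFun p) (hk : LocallyIntegrable k) :
    lap (mollify p k) = mollify (lap p) k := by
  ext x
  have hp₂ i : IsTestFun (∂[i] (∂[i] p)) := (hp.dirDeriv _).dirDeriv _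
  rw [lap_eq_sum ((contDiff_mollify hp hk).of_le ENat.LEInfty.out)]
  simp only [dirDeriv_mollify hp hk, dirDeriv_mollify (hp.dirDeriv _) hk, mollify,
    lap_eq_sum (hp.contDiff.of_le ENat.LEInfty.out), Finset.mul_sum]
  exact (integral_finsetSum _ fun i _ => integrable_mollify_integrand (hp₂ i).continuous
    (hp₂ i).hasCompactSupport hk x).symm

theorem IsWeakSchrodingerSolution.lap_mollify (hkV : IsWeakSchrodingerSolution V k)
    (hV : Continuous V) (hk : LocallyIntegrable k) (hp : IsTestFun p) (x : Euc n) :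
    lap (mollify p k) x = mollify p (fun y => V y * k y) x := by
  have hpx := hp.comp_const_sub x
  have hint₁ : Integrable fun y => k y * lap (fun y => p (x - y)) y :=
    hk.integrable_smul_right_of_hasCompactSupport hpx.lap.continuous
      hpx.lap.hasCompactSupport
  have hint₂ : Integrable fun y => k y * (V y * p (x - y)) :=
    hk.integrable_smul_right_of_hasCompactSupport (hV.mul hpx.continuous)
      hpx.hasCompactSupport.mul_left
  have h := hkV _ hpx
  simp only [mul_sub] at h
  rw [integral_sub hint₁ hint₂, sub_eq_zero] at h
  simp only [lap_mollify_eq_mollify_lap hp hk, mollify, ← lap_comp_const_sub hp.contDiff, h]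
  exact integral_congr_ae (.of_forall fun y => by ring)

theorem IsWeakSchrodingerSolution.abs_lap_mollify_sub_le (hkV : IsWeakSchrodingerSolution V k)
    (hV : Continuous V) (hk : LocallyIntegrable k) (hp : IsTestFun p) (hp₀ : ∀ x, 0 ≤ p x) {ε : ℝ}
    {x : Euc n} (hε : ∀ y, p (x - y) ≠ 0 → |V y - V x| ≤ ε) :
    |lap (mollify p k) x - V x * mollify p k x| ≤ ε * mollify p (fun y => |k y|) x := by
  have hVk : LocallyIntegrable fun y => V y * k y := hk.continuous_mul hV
  have hint := integrable_mollify_integrand hp.continuous hp.hasCompactSupport hk x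
  have hint' := integrable_mollify_integrand hp.continuous hp.hasCompactSupport hVk x
  have hint'' := integrable_mollify_integrand hp.continuous hp.hasCompactSupport
    (locallyIntegrable_abs hk) x
  rw [hkV.lap_mollify hV hk hp, mollify, mollify, mollify, ← integral_const_mul,
    ← integral_const_mul, ← integral_sub hint' (hint.const_mul _)]
  refine norm_integral_le_of_norm_le
    (f := fun y => V y * k y * p (x - y) - V x * (k y * p (x - y)))
    (hint''.const_mul ε) (.of_forall fun y => ?_)
  calc |V y * k y * p (x - y) - V x * (k y * p (x - y))|
      = |V y - V x| * (|k y| * p (x - y)) := by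
        rw [← abs_of_nonneg (hp₀ (x - y)), ← abs_mul, ← abs_mul, abs_of_nonneg (hp₀ _)]
        ring_nf
    _ ≤ ε * (|k y| * p (x - y)) := by
        by_cases hy : p (x - y) = 0
        · simp [hy]
        · exact mul_le_mul_of_nonneg_right (hε y hy) (mul_nonneg (abs_nonneg _) (hp₀ _))

theorem IsWeakSchrodingerSolution.abs_mollify_mul_lap_sub_le
    (hkV : IsWeakSchrodingerSolution V k) (hV : Continuous V) (hk : MemLp k 2) (hp : IsTestFun p)
    (hp₀ : ∀ x, 0 ≤ p x) (hp₁ : ∫ x, p x = 1) {ε : ℝ} {x : Euc n} (hε₀ : 0 ≤ ε)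
    (hε : ∀ y, p (x - y) ≠ 0 → |V y - V x| ≤ ε) :
    |mollify p k x * (lap (mollify p k) x - V x * mollify p k x)| ≤
      ε * mollify p (fun y => k y ^ 2) x := by
  have hkl : LocallyIntegrable k := hk.locallyIntegrable one_le_two
  set A := mollify p (fun y => |k y|) x
  have hkA : |mollify p k x| ≤ A := abs_mollify_le hp.continuous hp.hasCompactSupport hp₀ hkl x
  have hA : A ^ 2 ≤ mollify p (fun y => k y ^ 2) x := by
    have h := sq_mollify_le hp.continuous hp.hasCompactSupport hp₀ hp₁ hk.norm x
    simpa only [norm_eq_abs, sq_abs] using h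
  calc |mollify p k x * (lap (mollify p k) x - V x * mollify p k x)|
      = |mollify p k x| * |lap (mollify p k) x - V x * mollify p k x| := abs_mul _ _
    _ ≤ A * (ε * A) := mul_le_mul hkA (hkV.abs_lap_mollify_sub_le hV hkl hp hp₀ hε)
        (abs_nonneg _) ((abs_nonneg _).trans hkA)
    _ = ε * A ^ 2 := by ring
    _ ≤ ε * mollify p (fun y => k y ^ 2) x := mul_le_mul_of_nonneg_left hA hε₀

end Schrodinger

section Cutoff

theorem exists_cutoff (E : Type*) [NormedAddCommGroup E] [InnerProductSpace ℝ E]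
    [FiniteDimensional ℝ E] :
    ∃ M : ℝ, ∀ R : ℝ, 1 ≤ R → ∃ χ : E → ℝ, IsTestFun χ ∧ (∀ x, χ x ∈ Set.Icc 0 1) ∧
      (∀ x, ‖x‖ ≤ R → χ x = 1) ∧ ∀ x, ‖gradient χ x‖ ≤ M / R := by
  let χ₁ : ContDiffBump (0 : E) := ⟨1, 2, by norm_num, by norm_num⟩
  have hχ₁ : ContDiff ℝ ∞ χ₁ := χ₁.contDiff
  obtain ⟨M, hM⟩ := (hχ₁.continuous_fderiv (by simp)).bounded_above_of_compact_support
    (χ₁.hasCompactSupport.fderiv ℝ)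
  refine ⟨M, fun R hR => ?_⟩
  have hR₀ : 0 < R := one_pos.trans_le hR
  refine ⟨fun x => χ₁ (R⁻¹ • x), ⟨hχ₁.comp (contDiff_const_smul _),
    χ₁.hasCompactSupport.comp_smul (inv_ne_zero hR₀.ne')⟩, fun x => ⟨χ₁.nonneg, χ₁.le_one⟩,
    fun x hx => χ₁.one_of_mem_closedBall ?_, fun x => ?_⟩
  · rw [mem_closedBall_zero_iff, norm_smul, norm_inv, norm_of_nonneg hR₀.le, inv_mul_le_iff₀ hR₀]
    simpa [χ₁] using hx
  · rw [norm_gradient_eq_norm_fderiv, fderiv_comp_smul, norm_smul, norm_inv,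
      norm_of_nonneg hR₀.le, inv_mul_eq_div]
    exact div_le_div_of_nonneg_right (hM _) hR₀.le

end Cutoff

section CauchySchwarz

variable {α E : Type*} [MeasurableSpace α] {μ : Measure α} [NormedAddCommGroup E]
  [InnerProductSpace ℝ E]

theorem sq_integral_inner_le {f g : α → E} (hf : MemLp f 2 μ) (hg : MemLp g 2 μ) :
    (∫ x, ⟪f x, g x⟫ ∂μ) ^ 2 ≤ (∫ x, ‖f x‖ ^ 2 ∂μ) * ∫ x, ‖g x‖ ^ 2 ∂μ := by
  have hinner {f g : α → E} (hf : MemLp f 2 μ) (hg : MemLp g 2 μ) :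
      ⟪hf.toLp f, hg.toLp g⟫ = ∫ x, ⟪f x, g x⟫ ∂μ := by
    rw [L2.inner_def]
    refine integral_congr_ae ?_
    filter_upwards [hf.coeFn_toLp, hg.coeFn_toLp] with x hfx hgx
    rw [hfx, hgx]
  simpa only [hinner, ← sq, real_inner_self_eq_norm_sq] using
    real_inner_mul_inner_self_le (hf.toLp f) (hg.toLp g)

theorem sq_integral_mul_le {f g : α → ℝ} (hf : MemLp f 2 μ) (hg : MemLp g 2 μ) :
    (∫ x, f x * g x ∂μ) ^ 2 ≤ (∫ x, f x ^ 2 ∂μ) * ∫ x, g x ^ 2 ∂μ := by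
  simpa [mul_comm] using sq_integral_inner_le hf hg

end CauchySchwarz

section RangeOfGenerator

variable {n : ℕ} {ψ k u w χ p : Euc n → ℝ}

/-- The potential `V` for which conjugation by `exp (ψ / 2)` turns `Lop ψ` into the Schrödinger
operator `Δ - V`. -/
def schrodingerPotential (ψ : Euc n → ℝ) (x : Euc n) : ℝ := ‖gradient ψ x‖ ^ 2 / 4 - lap ψ x / 2

theorem continuous_lap (hu : ContDiff ℝ ∞ u) : Continuous (lap u) := by
  rw [← Lop_zero]
  exact (contDiff_Lop contDiff_const hu).continuous

theorem continuous_schrodingerPotential (hψ : ContDiff ℝ ∞ ψ) :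
    Continuous (schrodingerPotential ψ) :=
  (((continuous_gradient hψ).norm.pow 2).div_const 4).sub ((continuous_lap hψ).div_const 2)

theorem dirDeriv_exp_half (hψ : Differentiable ℝ ψ) (v : Euc n) :
    dirDeriv v (fun x => exp (ψ x / 2)) = fun x => 1 / 2 * (dirDeriv v ψ x * exp (ψ x / 2)) := by
  have hhalf : (fun x => exp (ψ x / 2)) = fun x => exp (1 / 2 * ψ x) := by
    simp only [one_div, inv_mul_eq_div]
  rw [hhalf, dirDeriv_exp (hψ.const_mul (1 / 2)), dirDeriv_const_mul hψ]
  ext x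
  ring_nf

theorem gradient_exp_half (hψ : Differentiable ℝ ψ) (x : Euc n) :
    gradient (fun y => exp (ψ y / 2)) x = (exp (ψ x / 2) / 2) • gradient ψ x := by
  ext i
  simp only [gradient_apply, dirDeriv_exp_half hψ, PiLp.smul_apply, smul_eq_mul]
  ring

theorem Lop_exp_half (hψ : ContDiff ℝ ∞ ψ) (x : Euc n) :
    Lop ψ (fun y => exp (ψ y / 2)) x = -(schrodingerPotential ψ x * exp (ψ x / 2)) := by
  have hψd : Differentiable ℝ ψ := hψ.differentiable (by simp)
  have hexp : Differentiable ℝ fun y => exp (ψ y / 2) :=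
    (hψ.div_const 2).exp.differentiable (by simp)
  have hdd i : Differentiable ℝ (∂[i] ψ) := (contDiff_dirDeriv hψ _).differentiable (by simp)
  rw [Lop_eq_sum ψ (hψ.div_const 2).exp, schrodingerPotential, norm_gradient_sq,
    lap_eq_sum (hψ.of_le ENat.LEInfty.out), Finset.sum_div, Finset.sum_div,
    ← Finset.sum_sub_distrib, Finset.sum_mul, ← Finset.sum_neg_distrib]
  refine Finset.sum_congr rfl fun i _ => ?_
  rw [dirDeriv_exp_half hψd, dirDeriv_const_mul ((hdd i).fun_mul hexp),
    dirDeriv_mul (hdd i) hexp, dirDeriv_exp_half hψd]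
  ring

theorem Lop_mul_exp_half (hψ : ContDiff ℝ ∞ ψ) (hw : ContDiff ℝ ∞ w) (x : Euc n) :
    Lop ψ (fun y => w y * exp (ψ y / 2)) x =
      exp (ψ x / 2) * (lap w x - schrodingerPotential ψ x * w x) := by
  rw [Lop_mul ψ hw (hψ.div_const 2).exp, Lop_exp_half hψ,
    gradient_exp_half (hψ.differentiable (by simp)), inner_smul_right, Lop,
    real_inner_comm (gradient w x)]
  ring

theorem integral_norm_gradient_mul_exp_half_sq (hψ : ContDiff ℝ ∞ ψ) (hχ : IsTestFun χ)
    (hw : ContDiff ℝ ∞ w) :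
    ∫ x, ‖gradient (fun y => χ y * (w y * exp (ψ y / 2))) x‖ ^ 2 ∂gibbsMeasure ψ =
      ∫ x, w x ^ 2 * ‖gradient χ x‖ ^ 2 -
        χ x ^ 2 * (w x * (lap w x - schrodingerPotential ψ x * w x)) := by
  rw [integral_norm_gradient_mul_sq hψ hχ (hw.mul (hψ.div_const 2).exp),
    integral_gibbsMeasure hψ.continuous.measurable]
  refine integral_congr_ae (.of_forall fun x => ?_)
  have hexp : exp (ψ x / 2) * exp (ψ x / 2) * exp (-ψ x) = 1 := by
    rw [← exp_add, ← exp_add]; simp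
  simp only [Lop_mul_exp_half hψ hw]
  linear_combination (w x ^ 2 * ‖gradient χ x‖ ^ 2 -
    χ x ^ 2 * (w x * (lap w x - schrodingerPotential ψ x * w x))) * hexp

theorem IsWeakSchrodingerSolution.integral_norm_gradient_cutoff_mollify_le
    (hkV : IsWeakSchrodingerSolution (schrodingerPotential ψ) k) (hψ : ContDiff ℝ ∞ ψ)
    (hk : MemLp k 2) (hχ : IsTestFun χ) (hχ₁ : ∀ x, χ x ∈ Set.Icc 0 1) (hp : IsTestFun p)
    (hp₀ : ∀ x, 0 ≤ p x) (hp₁ : ∫ x, p x = 1) {δ ε : ℝ} (hε₀ : 0 ≤ ε)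
    (hδ : ∀ x, ‖gradient χ x‖ ^ 2 ≤ δ)
    (hε : ∀ x ∈ tsupport χ, ∀ y, p (x - y) ≠ 0 →
      |schrodingerPotential ψ y - schrodingerPotential ψ x| ≤ ε) :
    ∫ x, ‖gradient (fun y => χ y * (mollify p k y * exp (ψ y / 2))) x‖ ^ 2 ∂gibbsMeasure ψ ≤
      (δ + ε) * ∫ x, k x ^ 2 := by
  have hkl : LocallyIntegrable k := hk.locallyIntegrable one_le_two
  set V := schrodingerPotential ψ
  set F := mollify p k
  set S := mollify p fun y => k y ^ 2
  have hF : ContDiff ℝ ∞ F := contDiff_mollify hp hkl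
  have hFS x : F x ^ 2 ≤ S x := sq_mollify_le hp.continuous hp.hasCompactSupport hp₀ hp₁ hk x
  have hS : ∫ x, S x = ∫ x, k x ^ 2 := by
    rw [integral_mollify hp.integrable hk.integrable_sq, hp₁, mul_one]
  have hpotential x : -(χ x ^ 2 * (F x * (lap F x - V x * F x))) ≤ ε * S x := by
    by_cases hx : x ∈ tsupport χ
    · have h := hkV.abs_mollify_mul_lap_sub_le (continuous_schrodingerPotential hψ) hk hp hp₀ hp₁
        hε₀ (hε x hx)
      calc -(χ x ^ 2 * (F x * (lap F x - V x * F x)))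
          = χ x ^ 2 * -(F x * (lap F x - V x * F x)) := by ring
        _ ≤ χ x ^ 2 * (ε * S x) :=
            mul_le_mul_of_nonneg_left ((neg_le_abs _).trans h) (sq_nonneg _)
        _ ≤ ε * S x := mul_le_of_le_one_left ((abs_nonneg _).trans h)
            (pow_le_one₀ (hχ₁ x).1 (hχ₁ x).2)
    · simpa [image_eq_zero_of_notMem_tsupport hx] using
        mul_nonneg hε₀ ((sq_nonneg _).trans (hFS x))
  rw [integral_norm_gradient_mul_exp_half_sq hψ hχ hF, ← hS, ← integral_const_mul]
  have hcont : Continuous fun x => F x ^ 2 * ‖gradient χ x‖ ^ 2 -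
      χ x ^ 2 * (F x * (lap F x - V x * F x)) :=
    ((hF.continuous.pow 2).mul ((continuous_gradient hχ.contDiff).norm.pow 2)).sub
      ((hχ.continuous.pow 2).mul (hF.continuous.mul ((continuous_lap hF).sub
        ((continuous_schrodingerPotential hψ).mul hF.continuous))))
  refine integral_mono (hcont.integrable_of_hasCompactSupport ?_)
    ((integrable_mollify hp.integrable hk.integrable_sq).const_mul _) fun x => ?_
  · refine .of_support_subset_isCompact hχ.hasCompactSupport fun x => not_imp_comm.1 fun hx => ?_
    simp [gradient_of_notMem_tsupport hx, image_eq_zero_of_notMem_tsupport hx]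
  · change F x ^ 2 * ‖gradient χ x‖ ^ 2 - _ ≤ (δ + ε) * S x
    have hgrad : F x ^ 2 * ‖gradient χ x‖ ^ 2 ≤ S x * δ :=
      mul_le_mul (hFS x) (hδ x) (sq_nonneg _) ((sq_nonneg _).trans (hFS x))
    linarith [hpotential x]

theorem IsTestFun.integrable_norm_gradient_sq {μ : Measure (Euc n)} [IsLocallyFiniteMeasure μ]
    (hu : IsTestFun u) : Integrable (fun x => ‖gradient u x‖ ^ 2) μ :=
  ((continuous_gradient hu.contDiff).norm.pow 2).integrable_of_hasCompactSupport <|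
    .of_support_subset_isCompact hu.hasCompactSupport fun x => not_imp_comm.1 fun hx => by
      simp [gradient_of_notMem_tsupport hx]

theorem abs_dirDeriv_le_norm_gradient (v : Euc n) (u : Euc n → ℝ) (x : Euc n) :
    |dirDeriv v u x| ≤ ‖v‖ * ‖gradient u x‖ := by
  rw [norm_gradient_eq_norm_fderiv, mul_comm]
  exact (fderiv ℝ u x).le_opNorm v

theorem sq_integral_mul_dirDeriv_le (hψ : ContDiff ℝ ∞ ψ) (hχ : IsTestFun χ)
    (hu : ContDiff ℝ ∞ u) (hw : IsTestFun w) (hχw : ∀ x ∈ tsupport w, χ x = 1) (v : Euc n) :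
    (∫ x, u x * dirDeriv v w x) ^ 2 ≤
      ‖v‖ ^ 2 * (∫ x, ‖gradient (fun y => χ y * u y) x‖ ^ 2 ∂gibbsMeasure ψ) *
        ∫ x, (w x * exp (ψ x)) ^ 2 ∂gibbsMeasure ψ := by
  have hψm := hψ.continuous.measurable
  have := isLocallyFiniteMeasure_gibbsMeasure hψ.continuous
  set χu := fun y => χ y * u y
  have hχu : IsTestFun χu := hχ.mul_right hu
  have hwψ : IsTestFun fun x => w x * exp (ψ x) := hw.mul_right hψ.exp
  obtain ⟨K, hK⟩ := hχu.exists_lipschitzWith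
  have hparts : ∫ x, u x * dirDeriv v w x =
      -∫ x, dirDeriv v χu x * (w x * exp (ψ x)) ∂gibbsMeasure ψ := calc
    _ = ∫ x, χu x * dirDeriv v w x := by
        congr with x
        by_cases hx : x ∈ tsupport w
        · simp [χu, hχw x hx]
        · simp [dirDeriv_of_notMem_tsupport hx]
    _ = -∫ x, dirDeriv v χu x * w x := integral_mul_dirDeriv_of_lipschitzWith hK hw v
    _ = _ := by simp [integral_gibbsMeasure hψm, mul_assoc, ← exp_add]
  have henergy : ∫ x, dirDeriv v χu x ^ 2 ∂gibbsMeasure ψ ≤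
      ‖v‖ ^ 2 * ∫ x, ‖gradient χu x‖ ^ 2 ∂gibbsMeasure ψ := by
    rw [← integral_const_mul]
    refine integral_mono (hχu.dirDeriv v).memLp_two.integrable_sq
      (hχu.integrable_norm_gradient_sq.const_mul _) fun x => ?_
    simpa only [mul_pow, sq_abs] using
      pow_le_pow_left₀ (abs_nonneg _) (abs_dirDeriv_le_norm_gradient v χu x) 2
  rw [hparts, neg_sq]
  exact (sq_integral_mul_le (hχu.dirDeriv v).memLp_two hwψ.memLp_two).trans
    (mul_le_mul_of_nonneg_right henergy (integral_nonneg fun x => sq_nonneg _))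

theorem exists_contDiffBump_oscillation_le {V : Euc n → ℝ} (hV : Continuous V) {s : Set (Euc n)}
    (hs : IsCompact s) {ε : ℝ} (hε : 0 < ε) :
    ∃ φ : ContDiffBump (0 : Euc n), φ.rOut ≤ ε ∧
      ∀ x ∈ s, ∀ y, φ.normed volume (x - y) ≠ 0 → |V y - V x| ≤ ε := by
  obtain ⟨r, hr, hVr⟩ := Metric.mem_uniformity_dist.1
    (hs.uniformContinuousAt_of_continuousAt V (fun x _ => hV.continuousAt)
      (Metric.dist_mem_uniformity hε))
  refine ⟨⟨min r ε / 2, min r ε, by positivity, half_lt_self (by positivity)⟩, min_le_right _ _,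
    fun x hx y hxy => ?_⟩
  have h : dist (V x) (V y) < ε :=
    hVr ((dist_lt_rOut_of_normed_ne_zero hxy).trans_le (min_le_left _ _)) hx
  rw [abs_sub_comm]
  exact h.le

theorem IsWeakSchrodingerSolution.integral_mul_exp_half_mul_dirDeriv_eq_zero
    (hkV : IsWeakSchrodingerSolution (schrodingerPotential ψ) k) (hψ : ContDiff ℝ ∞ ψ)
    (hk : MemLp k 2) (hw : IsTestFun w) (v : Euc n) :
    ∫ x, k x * (exp (ψ x / 2) * dirDeriv v w x) = 0 := by
  obtain ⟨M, hM⟩ := exists_cutoff (Euc n)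
  choose χ hχ hχ₁ hχ_one hχ_grad using fun m : ℕ => hM (m + 1) (by simp)
  choose φ hφ hφV using fun m : ℕ => exists_contDiffBump_oscillation_le
    (continuous_schrodingerPotential hψ) (hχ m).hasCompactSupport.isCompact
    (Nat.one_div_pos_of_nat (α := ℝ) (n := m))
  have hφ₀ : Filter.Tendsto (fun m => (φ m).rOut) .atTop (nhds 0) :=
    squeeze_zero (fun m => (φ m).rOut_pos.le) hφ tendsto_one_div_add_atTop_nhds_zero_nat
  set k' := fun m => mollify ((φ m).normed volume) k
  have hk' m : ContDiff ℝ ∞ fun x => k' m x * exp (ψ x / 2) :=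
    (contDiff_mollify (isTestFun_normed _) (hk.locallyIntegrable one_le_two)).mul
      (hψ.div_const 2).exp
  have henergy m : ∫ x, ‖gradient (fun y => χ m y * (k' m y * exp (ψ y / 2))) x‖ ^ 2
      ∂gibbsMeasure ψ ≤ ((M / (m + 1)) ^ 2 + 1 / (m + 1)) * ∫ x, k x ^ 2 :=
    hkV.integral_norm_gradient_cutoff_mollify_le hψ hk (hχ m) (hχ₁ m) (isTestFun_normed _)
      (φ m).nonneg_normed (φ m).integral_normed (by positivity)
      (fun x => pow_le_pow_left₀ (norm_nonneg _) (hχ_grad m x) 2) (hφV m)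
  have hbound : ∀ᶠ m in .atTop, (∫ x, k' m x * (exp (ψ x / 2) * dirDeriv v w x)) ^ 2 ≤
      ‖v‖ ^ 2 * (((M / (m + 1)) ^ 2 + 1 / (m + 1)) * ∫ x, k x ^ 2) *
        ∫ x, (w x * exp (ψ x)) ^ 2 ∂gibbsMeasure ψ := by
    obtain ⟨R, hR⟩ := hw.hasCompactSupport.isCompact.isBounded.exists_norm_le
    filter_upwards [Filter.eventually_ge_atTop ⌈R⌉₊] with m hm
    have hχw x (hx : x ∈ tsupport w) : χ m x = 1 :=
      hχ_one m x (by linarith [hR x hx, Nat.ceil_le.1 hm])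
    simp only [← mul_assoc]
    refine (sq_integral_mul_dirDeriv_le hψ (hχ m) (hk' m) hw hχw v).trans ?_
    rw [mul_assoc _ _ (∫ x, k x ^ 2)]
    gcongr
    exact henergy m
  have hlim := (tendsto_integral_mollify_mul hφ₀ (hk.locallyIntegrable one_le_two)
    ((hψ.div_const 2).exp.continuous.mul (hw.dirDeriv v).continuous)
    (hw.dirDeriv v).hasCompactSupport.mul_left).pow 2
  have hbound₀ : Filter.Tendsto (fun m : ℕ => ‖v‖ ^ 2 * (((M / (m + 1)) ^ 2 + 1 / (m + 1)) *
      ∫ x, k x ^ 2) * ∫ x, (w x * exp (ψ x)) ^ 2 ∂gibbsMeasure ψ) .atTop (nhds 0) := by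
    have h₁ := tendsto_one_div_add_atTop_nhds_zero_nat (𝕜 := ℝ)
    simpa [div_eq_mul_inv] using ((((h₁.const_mul M).pow 2).add h₁).mul_const
      (∫ x, k x ^ 2)).const_mul (‖v‖ ^ 2) |>.mul_const
        (∫ x, (w x * exp (ψ x)) ^ 2 ∂gibbsMeasure ψ)
  exact pow_eq_zero_iff two_ne_zero |>.1
    (le_antisymm (le_of_tendsto_of_tendsto hlim hbound₀ hbound) (sq_nonneg _))

theorem ae_eq_const_of_integral_mul_Lop_eq_zero (hψ : ContDiff ℝ ∞ ψ) {h : Euc n → ℝ}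
    (hh : MemLp h 2 (gibbsMeasure ψ))
    (horth : ∀ u, IsTestFun u → ∫ x, h x * Lop ψ u x ∂gibbsMeasure ψ = 0) :
    ∃ c : ℝ, h =ᵐ[volume] fun _ => c := by
  have hψm := hψ.continuous.measurable
  have hhm : AEStronglyMeasurable h volume :=
    hh.aestronglyMeasurable.mono_ac (absolutelyContinuous_gibbsMeasure hψm)
  have hk := (memLp_two_gibbsMeasure_iff hψm hhm).1 hh
  set k := fun x => h x * exp (-ψ x / 2)
  have hkh x : k x * exp (ψ x / 2) = h x := by
    rw [mul_assoc, ← exp_add]; simp [neg_div]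
  have hhl : LocallyIntegrable h := by
    simpa only [hkh] using
      (hk.locallyIntegrable one_le_two).mul_continuous (hψ.div_const 2).exp.continuous
  have hkV : IsWeakSchrodingerSolution (schrodingerPotential ψ) k := fun w hw => by
    rw [← horth _ (hw.mul_right (hψ.div_const 2).exp), integral_gibbsMeasure hψm]
    refine integral_congr_ae (.of_forall fun x => ?_)
    have hexp : exp (-ψ x / 2) = exp (ψ x / 2) * exp (-ψ x) := by
      rw [← exp_add]; ring_nf
    simp only [Lop_mul_exp_half hψ hw.contDiff, k, hexp]
    ring
  refine ae_eq_const_of_integral_mul_dirDeriv_eq_zero hhl fun w hw v => ?_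
  rw [← hkV.integral_mul_exp_half_mul_dirDeriv_eq_zero hψ hk hw v]
  simp only [← mul_assoc, hkh]

end RangeOfGenerator

section Duality

variable {n : ℕ} {ψ f u : Euc n → ℝ} {K : NNReal} {C : ℝ}

/-- The image of the test functions under `Lop ψ`, as a subspace of `L²` of the Gibbs measure. -/
def rangeLop (ψ : Euc n → ℝ) : Submodule ℝ (Lp ℝ 2 (gibbsMeasure ψ)) where
  carrier := {F | ∃ u, IsTestFun u ∧ F =ᵐ[gibbsMeasure ψ] Lop ψ u}
  add_mem' := by
    rintro F G ⟨u, hu, hF⟩ ⟨w, hw, hG⟩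
    refine ⟨u + w, hu.add hw, ?_⟩
    rw [Lop_add ψ hu.contDiff hw.contDiff]
    exact (Lp.coeFn_add F G).trans (hF.add hG)
  zero_mem' := by
    refine ⟨0, ⟨contDiff_const, .zero⟩, (Lp.coeFn_zero ℝ 2 _).trans (.of_forall fun x => ?_)⟩
    have hx : x ∉ tsupport (0 : Euc n → ℝ) := by simp [tsupport]
    exact (Lop_of_notMem_tsupport ψ contDiff_const hx).symm
  smul_mem' := by
    rintro c F ⟨u, hu, hF⟩
    refine ⟨c • u, hu.const_smul c, ?_⟩
    rw [Lop_const_smul ψ hu.contDiff]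
    exact (Lp.coeFn_smul c F).trans (hF.const_smul c)

theorem toLp_mem_topologicalClosure_rangeLop (hψ : ContDiff ℝ ∞ ψ)
    (hf : MemLp f 2 (gibbsMeasure ψ)) (hf₀ : ∫ x, f x ∂gibbsMeasure ψ = 0) :
    hf.toLp f ∈ (rangeLop ψ).topologicalClosure := by
  have := isLocallyFiniteMeasure_gibbsMeasure hψ.continuous
  rw [← Submodule.orthogonal_orthogonal_eq_closure, Submodule.mem_orthogonal]
  intro h hh
  obtain ⟨c, hc⟩ := ae_eq_const_of_integral_mul_Lop_eq_zero hψ (Lp.memLp h) fun u hu => by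
    have hL : MemLp (Lop ψ u) 2 (gibbsMeasure ψ) := (hu.Lop hψ).memLp_two
    rw [← (Submodule.mem_orthogonal _ _).1 hh _ ⟨u, hu, hL.coeFn_toLp⟩, L2.inner_def]
    refine integral_congr_ae ?_
    filter_upwards [hL.coeFn_toLp] with x hx
    simp [hx]
  have hcf : ∫ x, ⟪h x, hf.toLp f x⟫ ∂gibbsMeasure ψ = ∫ x, c * f x ∂gibbsMeasure ψ := by
    refine integral_congr_ae ?_
    filter_upwards [hf.coeFn_toLp, (gibbsMeasure_absolutelyContinuous ψ).ae_le hc] with x hfx hhx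
    simp [hfx, hhx, mul_comm]
  rw [L2.inner_def, hcf, integral_const_mul, hf₀, mul_zero]

theorem exists_integral_sub_Lop_sq_le (hψ : ContDiff ℝ ∞ ψ) (hf : MemLp f 2 (gibbsMeasure ψ))
    (hf₀ : ∫ x, f x ∂gibbsMeasure ψ = 0) {δ : ℝ} (hδ : 0 < δ) :
    ∃ u, IsTestFun u ∧ ∫ x, (f x - Lop ψ u x) ^ 2 ∂gibbsMeasure ψ ≤ δ := by
  obtain ⟨F, ⟨u, hu, hF⟩, hfF⟩ := Metric.mem_closure_iff.1
    (toLp_mem_topologicalClosure_rangeLop hψ hf hf₀) (√δ) (sqrt_pos.2 hδ)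
  have hnorm : ∫ x, (f x - Lop ψ u x) ^ 2 ∂gibbsMeasure ψ = ‖hf.toLp f - F‖ ^ 2 := by
    rw [← real_inner_self_eq_norm_sq, L2.inner_def]
    refine integral_congr_ae ?_
    filter_upwards [hF, hf.coeFn_toLp, Lp.coeFn_sub (hf.toLp f) F] with x hFx hfx hsub
    rw [hsub, Pi.sub_apply, hfx, hFx]
    simp [sq]
  rw [dist_eq_norm] at hfF
  refine ⟨u, hu, hnorm.trans_le ?_⟩
  exact (pow_le_pow_left₀ (norm_nonneg _) hfF.le 2).trans_eq (sq_sqrt hδ.le)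

theorem norm_gradient_le_of_lipschitzWith (hf : LipschitzWith K f) (x : Euc n) :
    ‖gradient f x‖ ≤ K :=
  (norm_gradient_eq_norm_fderiv f x).trans_le (norm_fderiv_le_of_lipschitz ℝ hf)

theorem measurable_gradient (f : Euc n → ℝ) : Measurable (gradient f) :=
  (InnerProductSpace.toDual ℝ (Euc n)).symm.continuous.measurable.comp (measurable_fderiv ℝ f)

theorem memLp_gradient_of_lipschitzWith {μ : Measure (Euc n)} [IsFiniteMeasure μ]
    (hf : LipschitzWith K f) {p : ℝ≥0∞} : MemLp (gradient f) p μ :=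
  .of_bound (measurable_gradient f).aestronglyMeasurable K
    (.of_forall (norm_gradient_le_of_lipschitzWith hf))

theorem integral_sub_const_mul_Lop (hψ : ContDiff ℝ ∞ ψ) (hf : LipschitzWith K f)
    (hu : IsTestFun u) (c : ℝ) :
    ∫ x, (f x - c) * Lop ψ u x ∂gibbsMeasure ψ =
      -∫ x, ⟪gradient f x, gradient u x⟫ ∂gibbsMeasure ψ := by
  have hfc : LipschitzWith K fun x => f x - c := fun x y => by simpa using hf x y
  rw [integral_mul_Lop hψ hfc hu]
  simp only [gradient, fderiv_sub_const]

/-- The bound `∫ ‖∇u‖² ≤ C ∫ (Lop ψ u)²` for all test functions: the dual form of the Poincaré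
inequality with constant `C` for the Gibbs measure of `ψ`. -/
def IsDualPoincareConst (ψ : Euc n → ℝ) (C : ℝ) : Prop :=
  ∀ u, IsTestFun u →
    ∫ x, ‖gradient u x‖ ^ 2 ∂gibbsMeasure ψ ≤ C * ∫ x, Lop ψ u x ^ 2 ∂gibbsMeasure ψ

open ProbabilityTheory

variable [IsProbabilityMeasure (gibbsMeasure ψ)]

theorem sq_integral_inner_gradient_le_variance_mul (hψ : ContDiff ℝ ∞ ψ) (hf : LipschitzWith K f)
    (hf₂ : MemLp f 2 (gibbsMeasure ψ)) (hu : IsTestFun u) :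
    (∫ x, ⟪gradient f x, gradient u x⟫ ∂gibbsMeasure ψ) ^ 2 ≤
      Var[f; gibbsMeasure ψ] * ∫ x, Lop ψ u x ^ 2 ∂gibbsMeasure ψ := by
  rw [← neg_sq, ← integral_sub_const_mul_Lop hψ hf hu (∫ x, f x ∂gibbsMeasure ψ),
    variance_eq_integral hf₂.aemeasurable]
  exact sq_integral_mul_le (hf₂.sub (memLp_const _)) (hu.Lop hψ).memLp_two

theorem variance_eq_integral_sub_Lop_sq (hψ : ContDiff ℝ ∞ ψ) (hf : LipschitzWith K f)
    (hf₂ : MemLp f 2 (gibbsMeasure ψ)) (hu : IsTestFun u) :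
    Var[f; gibbsMeasure ψ] =
      ∫ x, (f x - ∫ y, f y ∂gibbsMeasure ψ - Lop ψ u x) ^ 2 ∂gibbsMeasure ψ -
        2 * ∫ x, ⟪gradient f x, gradient u x⟫ ∂gibbsMeasure ψ -
        ∫ x, Lop ψ u x ^ 2 ∂gibbsMeasure ψ := by
  rw [variance_eq_integral hf₂.aemeasurable]
  set m := ∫ y, f y ∂gibbsMeasure ψ
  have hL : MemLp (Lop ψ u) 2 (gibbsMeasure ψ) := (hu.Lop hψ).memLp_two
  have hfm : MemLp (fun x => f x - m) 2 (gibbsMeasure ψ) := hf₂.sub (memLp_const m)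
  have hsub : Integrable (fun x => (f x - m - Lop ψ u x) ^ 2) (gibbsMeasure ψ) :=
    (hfm.sub hL).integrable_sq
  have hmul : Integrable (fun x => 2 * ((f x - m) * Lop ψ u x)) (gibbsMeasure ψ) :=
    (hfm.integrable_mul hL).const_mul 2
  have hadd : Integrable (fun x => (f x - m - Lop ψ u x) ^ 2 + 2 * ((f x - m) * Lop ψ u x))
      (gibbsMeasure ψ) := hsub.add hmul
  have hsq x : (f x - m) ^ 2 = (f x - m - Lop ψ u x) ^ 2 + 2 * ((f x - m) * Lop ψ u x) -
      Lop ψ u x ^ 2 := by ring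
  simp only [hsq]
  rw [integral_sub hadd hL.integrable_sq, integral_add hsub hmul, integral_const_mul,
    integral_sub_const_mul_Lop hψ hf hu]
  ring

theorem IsDualPoincareConst.variance_le (hC : IsDualPoincareConst ψ C) (hC₀ : 0 ≤ C)
    (hψ : ContDiff ℝ ∞ ψ) (hf : LipschitzWith K f) (hf₂ : MemLp f 2 (gibbsMeasure ψ)) :
    Var[f; gibbsMeasure ψ] ≤ C * ∫ x, ‖gradient f x‖ ^ 2 ∂gibbsMeasure ψ := by
  refine le_of_forall_pos_le_add fun δ hδ => ?_
  have hmean : ∫ x, f x - ∫ y, f y ∂gibbsMeasure ψ ∂gibbsMeasure ψ = 0 := by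
    simp [integral_sub (hf₂.integrable one_le_two) (integrable_const _)]
  obtain ⟨u, hu, hδu⟩ :=
    exists_integral_sub_Lop_sq_le hψ (hf₂.sub (memLp_const _)) hmean hδ
  simp only [Pi.sub_apply] at hδu
  obtain ⟨Ku, hKu⟩ := hu.exists_lipschitzWith
  rw [variance_eq_integral_sub_Lop_sq hψ hf hf₂ hu]
  set X := ∫ x, ⟪gradient f x, gradient u x⟫ ∂gibbsMeasure ψ
  set A := ∫ x, Lop ψ u x ^ 2 ∂gibbsMeasure ψ
  set F := ∫ x, ‖gradient f x‖ ^ 2 ∂gibbsMeasure ψ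
  have hF : 0 ≤ F := integral_nonneg fun x => sq_nonneg _
  have hA : 0 ≤ A := integral_nonneg fun x => sq_nonneg _
  have hX : X ^ 2 ≤ C * F * A := calc
    X ^ 2 ≤ F * ∫ x, ‖gradient u x‖ ^ 2 ∂gibbsMeasure ψ :=
      sq_integral_inner_le (memLp_gradient_of_lipschitzWith hf)
        (memLp_gradient_of_lipschitzWith hKu)
    _ ≤ F * (C * A) := mul_le_mul_of_nonneg_left (hC u hu) hF
    _ = C * F * A := by ring
  have hamgm : -(2 * X) ≤ C * F + A :=
    (neg_le_abs _).trans (abs_le_of_sq_le_sq (by nlinarith only [hX, sq_nonneg (C * F - A)])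
      (add_nonneg (mul_nonneg hC₀ hF) hA))
  linarith

end Duality

section Improvement

variable {n : ℕ} {ψ u : Euc n → ℝ} {t κ C : ℝ}

theorem sum_integral_norm_gradient_sq_add_le (hψ : ContDiff ℝ ∞ ψ)
    (hHess : ∀ x v, t * ‖v‖ ^ 2 ≤ fderiv ℝ (fderiv ℝ ψ) x v v) (hu : IsTestFun u) :
    ∑ j, ∫ x, ‖gradient (∂[j] u) x‖ ^ 2 ∂gibbsMeasure ψ +
      t * ∫ x, ‖gradient u x‖ ^ 2 ∂gibbsMeasure ψ ≤ ∫ x, Lop ψ u x ^ 2 ∂gibbsMeasure ψ := by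
  have := isLocallyFiniteMeasure_gibbsMeasure hψ.continuous
  rw [integral_Lop_sq hψ hu, ← integral_const_mul]
  gcongr
  · exact hu.integrable_norm_gradient_sq.const_mul t
  · exact integrable_hessian_gradient hψ hu
  · exact fun x => hHess x _

theorem isDualPoincareConst_inv (ht : 0 < t) (hψ : ContDiff ℝ ∞ ψ)
    (hHess : ∀ x v, t * ‖v‖ ^ 2 ≤ fderiv ℝ (fderiv ℝ ψ) x v v) :
    IsDualPoincareConst ψ t⁻¹ := fun u hu => by
  rw [inv_mul_eq_div, le_div_iff₀' ht]
  exact (le_add_of_nonneg_left (Finset.sum_nonneg fun j _ => integral_nonneg fun x =>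
    sq_nonneg _)).trans (sum_integral_norm_gradient_sq_add_le hψ hHess hu)

open ProbabilityTheory

variable [IsProbabilityMeasure (gibbsMeasure ψ)]

theorem gradient_inner_left (b x : Euc n) : gradient (fun y => ⟪b, y⟫) x = b := by
  rw [gradient, ← coe_innerSL_apply ℝ b, ContinuousLinearMap.fderiv]
  exact (InnerProductSpace.toDual ℝ (Euc n)).symm_apply_apply b

theorem norm_integral_gradient_sq_le (hψ : ContDiff ℝ ∞ ψ)
    (hid : MemLp (fun x : Euc n => x) 2 (gibbsMeasure ψ)) (hκ₀ : 0 ≤ κ)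
    (hκ : ∀ v, Var[fun x => ⟪v, x⟫; gibbsMeasure ψ] ≤ κ * ‖v‖ ^ 2) (hu : IsTestFun u) :
    ‖∫ x, gradient u x ∂gibbsMeasure ψ‖ ^ 2 ≤ κ * ∫ x, Lop ψ u x ^ 2 ∂gibbsMeasure ψ := by
  obtain ⟨K, hK⟩ := hu.exists_lipschitzWith
  set b := ∫ x, gradient u x ∂gibbsMeasure ψ
  have hA : 0 ≤ ∫ x, Lop ψ u x ^ 2 ∂gibbsMeasure ψ := integral_nonneg fun x => sq_nonneg _
  have hb : ∫ x, ⟪gradient (fun y => ⟪b, y⟫) x, gradient u x⟫ ∂gibbsMeasure ψ = ‖b‖ ^ 2 := by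
    simp only [gradient_inner_left]
    rw [integral_inner ((memLp_gradient_of_lipschitzWith hK).integrable le_rfl),
      real_inner_self_eq_norm_sq]
  have hsq : (‖b‖ ^ 2) ^ 2 ≤ κ * ‖b‖ ^ 2 * ∫ x, Lop ψ u x ^ 2 ∂gibbsMeasure ψ := by
    rw [← hb]
    refine (sq_integral_inner_gradient_le_variance_mul hψ (innerSL ℝ b).lipschitz
      (hid.const_inner b) hu).trans ?_
    rw [hb]
    exact mul_le_mul_of_nonneg_right (hκ b) hA
  rcases (sq_nonneg ‖b‖).eq_or_lt with hb₀ | hb₀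
  · rw [← hb₀]
    positivity
  · exact le_of_mul_le_mul_left (by linarith) hb₀

theorem sum_variance_dirDeriv (hu : IsTestFun u) :
    ∑ j, Var[∂[j] u; gibbsMeasure ψ] =
      ∫ x, ‖gradient u x‖ ^ 2 ∂gibbsMeasure ψ - ‖∫ x, gradient u x ∂gibbsMeasure ψ‖ ^ 2 := by
  obtain ⟨K, hK⟩ := hu.exists_lipschitzWith
  have hmem j : MemLp (∂[j] u) 2 (gibbsMeasure ψ) := (hu.dirDeriv _).memLp_two
  have hmean j : (∫ x, gradient u x ∂gibbsMeasure ψ) j = ∫ x, ∂[j] u x ∂gibbsMeasure ψ := by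
    simp only [← gradient_apply]
    exact ((EuclideanSpace.proj j : Euc n →L[ℝ] ℝ).integral_comp_comm
      ((memLp_gradient_of_lipschitzWith hK).integrable le_rfl)).symm
  simp only [norm_gradient_sq, EuclideanSpace.real_norm_sq_eq (∫ _, _ ∂_), hmean]
  rw [integral_finsetSum _ fun j _ => (hmem j).integrable_sq, ← Finset.sum_sub_distrib]
  exact Finset.sum_congr rfl fun j _ => variance_eq_sub (hmem j)

theorem IsDualPoincareConst.improve (hC : IsDualPoincareConst ψ C) (hC₀ : 0 ≤ C) (ht : 0 ≤ t)
    (hψ : ContDiff ℝ ∞ ψ) (hHess : ∀ x v, t * ‖v‖ ^ 2 ≤ fderiv ℝ (fderiv ℝ ψ) x v v)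
    (hid : MemLp (fun x : Euc n => x) 2 (gibbsMeasure ψ)) (hκ₀ : 0 ≤ κ)
    (hκ : ∀ v, Var[fun x => ⟪v, x⟫; gibbsMeasure ψ] ≤ κ * ‖v‖ ^ 2) :
    IsDualPoincareConst ψ ((C + κ) / (1 + t * C)) := fun u hu => by
  have hvar : ∑ j, Var[∂[j] u; gibbsMeasure ψ] ≤
      C * ∑ j, ∫ x, ‖gradient (∂[j] u) x‖ ^ 2 ∂gibbsMeasure ψ := by
    rw [Finset.mul_sum]
    refine Finset.sum_le_sum fun j _ => ?_
    obtain ⟨K, hK⟩ := (hu.dirDeriv (EuclideanSpace.single j 1)).exists_lipschitzWith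
    exact hC.variance_le hC₀ hψ hK (hu.dirDeriv _).memLp_two
  rw [sum_variance_dirDeriv hu] at hvar
  have hbochner := mul_le_mul_of_nonneg_left
    (sum_integral_norm_gradient_sq_add_le hψ hHess hu) hC₀
  have hmean := norm_integral_gradient_sq_le hψ hid hκ₀ hκ hu
  rw [div_mul_eq_mul_div, le_div_iff₀ (by positivity)]
  linarith

theorem variance_le_sqrt_mul_of_le_hessian (ht : 0 < t) (hψ : ContDiff ℝ ∞ ψ)
    (hHess : ∀ x v, t * ‖v‖ ^ 2 ≤ fderiv ℝ (fderiv ℝ ψ) x v v)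
    (hid : MemLp (fun x : Euc n => x) 2 (gibbsMeasure ψ)) (hκ₀ : 0 ≤ κ)
    (hκ : ∀ v, Var[fun x => ⟪v, x⟫; gibbsMeasure ψ] ≤ κ * ‖v‖ ^ 2) {f : Euc n → ℝ} {K : NNReal}
    (hf : LipschitzWith K f) (hf₂ : MemLp f 2 (gibbsMeasure ψ)) :
    Var[f; gibbsMeasure ψ] ≤ √(κ / t) * ∫ x, ‖gradient f x‖ ^ 2 ∂gibbsMeasure ψ := by
  set S := Set.Ici 0 ∩ {C | IsDualPoincareConst ψ C}
  have hS_bdd : BddBelow S := ⟨0, fun C hC => hC.1⟩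
  have hS_closed : IsClosed S := by
    simp only [S, IsDualPoincareConst, Set.ofPred_forall]
    exact isClosed_Ici.inter <| isClosed_iInter fun u => isClosed_iInter fun _ =>
      isClosed_le continuous_const (continuous_id.mul continuous_const)
  obtain ⟨hC₀, hC⟩ : sInf S ∈ S := hS_closed.csInf_mem
    ⟨t⁻¹, inv_nonneg.2 ht.le, isDualPoincareConst_inv ht hψ hHess⟩ hS_bdd
  rw [Set.mem_Ici] at hC₀
  have hle : sInf S ≤ (sInf S + κ) / (1 + t * sInf S) := csInf_le hS_bdd
    ⟨div_nonneg (add_nonneg hC₀ hκ₀) (by positivity), hC.improve hC₀ ht.le hψ hHess hid hκ₀ hκ⟩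
  rw [le_div_iff₀ (by positivity)] at hle
  have hC_le : sInf S ≤ √(κ / t) := le_sqrt_of_sq_le (by rw [le_div_iff₀ ht]; linarith)
  exact (hC.variance_le hC₀ hψ hf hf₂).trans
    (mul_le_mul_of_nonneg_right hC_le (integral_nonneg fun x => sq_nonneg _))

end Improvement

section SmoothConvex

variable {E : Type*} [NormedAddCommGroup E] [InnerProductSpace ℝ E] {f : E → ℝ} {K : NNReal}

theorem le_hessian_of_strongConvexOn {t : ℝ} (hf : ContDiff ℝ 2 f)
    (hconv : StrongConvexOn Set.univ t f) (x v : E) :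
    t * ‖v‖ ^ 2 ≤ fderiv ℝ (fderiv ℝ f) x v v := by
  set h : ℝ → ℝ := fun s => f (x + s • v) - t / 2 * ‖x + s • v‖ ^ 2
  have hline s : HasDerivAt (fun s : ℝ => x + s • v) v s := by
    simpa using ((hasDerivAt_id s).smul_const v).const_add x
  have hh s : HasDerivAt h (fderiv ℝ f (x + s • v) v - t * ⟪x + s • v, v⟫) s := by
    have hf' := (hf.differentiable two_ne_zero (x + s • v)).hasFDerivAt.comp_hasDerivAt s (hline s)
    have hsq := ((hline s).norm_sq).const_mul (t / 2)
    exact (hf'.sub hsq).congr_deriv (by ring)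
  have hderiv : deriv h = fun s => fderiv ℝ f (x + s • v) v - t * ⟪x + s • v, v⟫ :=
    funext fun s => (hh s).deriv
  have hh' : HasDerivAt (deriv h) (fderiv ℝ (fderiv ℝ f) x v v - t * ‖v‖ ^ 2) 0 := by
    rw [hderiv]
    have hD : HasFDerivAt (fderiv ℝ f) (fderiv ℝ (fderiv ℝ f) x) x :=
      ((hf.fderiv_right (m := 1) le_rfl).differentiable one_ne_zero x).hasFDerivAt
    have hDv : HasDerivAt (fun s : ℝ => fderiv ℝ f (x + s • v) v)
        (fderiv ℝ (fderiv ℝ f) x v v) 0 := by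
      have h := hD.comp_hasDerivAt_of_eq 0 (hline 0) (by simp)
      simpa using h.clm_apply (hasDerivAt_const (0 : ℝ) v)
    have hinner : HasDerivAt (fun s : ℝ => t * ⟪x + s • v, v⟫) (t * ‖v‖ ^ 2) 0 := by
      simpa using ((hline 0).inner ℝ (hasDerivAt_const (0 : ℝ) v)).const_mul t
    exact hDv.sub hinner
  have hconv_h : ConvexOn ℝ Set.univ h := by
    have hcomp := (strongConvexOn_iff_convex.1 hconv).comp_affineMap (AffineMap.lineMap x (x + v))
    have hline_eq (s : ℝ) : AffineMap.lineMap x (x + v) s = x + s • v := by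
      rw [AffineMap.lineMap_apply_module', add_sub_cancel_left, add_comm]
    simpa only [Function.comp_def, hline_eq, Set.preimage_univ] using hcomp
  have hmono : Monotone (deriv h) :=
    monotoneOn_univ.1 (hconv_h.monotoneOn_deriv fun s _ => (hh s).differentiableAt)
  simpa [hh'.deriv] using hmono.deriv_nonneg (x := 0)

variable [FiniteDimensional ℝ E] [MeasurableSpace E] [BorelSpace E]

theorem concaveOn_mollify {p : E → ℝ} (hp : Continuous p) (hpc : HasCompactSupport p)
    (hp₀ : ∀ x, 0 ≤ p x) (hf : Continuous f) (hconc : ConcaveOn ℝ Set.univ f) :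
    ConcaveOn ℝ Set.univ (mollify p f) := by
  have hint x : Integrable fun z => p z * f (x - z) :=
    (hp.mul (by fun_prop)).integrable_of_hasCompactSupport hpc.mul_right
  refine ⟨convex_univ, fun x _ y _ a b ha hb hab => ?_⟩
  simp only [mollify_eq_lsmul_convolution, convolution, ContinuousLinearMap.lsmul_apply,
    smul_eq_mul]
  rw [← integral_const_mul, ← integral_const_mul,
    ← integral_add ((hint x).const_mul a) ((hint y).const_mul b)]
  refine integral_mono (((hint x).const_mul a).add ((hint y).const_mul b)) (hint _) fun z => ?_
  have hz : a • x + b • y - z = a • (x - z) + b • (y - z) := by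
    rw [smul_sub, smul_sub, sub_add_sub_comm, ← add_smul, hab, one_smul]
  have h := mul_le_mul_of_nonneg_left
    (hconc.2 (Set.mem_univ (x - z)) (Set.mem_univ (y - z)) ha hb hab) (hp₀ z)
  simp only [hz, smul_eq_mul] at h ⊢
  linarith

theorem exists_contDiff_concaveOn_near (hf : LipschitzWith K f)
    (hconc : ConcaveOn ℝ Set.univ f) {ε : ℝ} (hε : 0 < ε) :
    ∃ L : E → ℝ, ContDiff ℝ ∞ L ∧ ConcaveOn ℝ Set.univ L ∧ ∀ x, |L x - f x| ≤ ε := by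
  set r : ℝ := ε / (K + 1)
  have hr : 0 < r := by positivity
  let φ : ContDiffBump (0 : E) := ⟨r / 2, r, half_pos hr, half_lt_self hr⟩
  refine ⟨mollify (φ.normed volume) f,
    contDiff_mollify (isTestFun_normed φ) hf.continuous.locallyIntegrable,
    concaveOn_mollify φ.continuous_normed φ.hasCompactSupport_normed φ.nonneg_normed
      hf.continuous hconc, fun x => ?_⟩
  rw [mollify_eq_lsmul_convolution, ← Real.dist_eq]
  refine φ.dist_normed_convolution_le hf.continuous.aestronglyMeasurable fun y hy => ?_
  calc dist (f y) (f x) ≤ K * dist y x := hf.dist_le_mul y x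
    _ ≤ (K + 1) * r := by
      gcongr
      · exact le_add_of_nonneg_right zero_le_one
      · exact (Metric.mem_ball.1 hy).le
    _ = ε := mul_div_cancel₀ ε (by positivity)

end SmoothConvex

section LogConcave

variable {n : ℕ} {g : Euc n → ℝ}

theorem IsLogConcaveFun.concaveOn_log (hg : IsLogConcaveFun g) :
    ConcaveOn ℝ {x | 0 < g x} fun x => log (g x) := by
  have hpow {x y : Euc n} {a b : ℝ} (hx : 0 < g x) (hy : 0 < g y) : 0 < g x ^ a * g y ^ b :=
    mul_pos (rpow_pos_of_pos hx a) (rpow_pos_of_pos hy b)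
  refine ⟨fun x hx y hy a b ha hb hab => (hpow hx hy).trans_le (hg.2 x y a b ha hb hab),
    fun x (hx : 0 < g x) y (hy : 0 < g y) a b ha hb hab => ?_⟩
  have h := log_le_log (hpow hx hy) (hg.2 x y a b ha hb hab)
  rwa [log_mul (rpow_pos_of_pos hx a).ne' (rpow_pos_of_pos hy b).ne', log_rpow hx,
    log_rpow hy] at h

theorem IsLogConcaveFun.eqOn_zero_compl (hg : IsLogConcaveFun g) :
    Set.EqOn g 0 {x | 0 < g x}ᶜ :=
  fun x hx => le_antisymm (not_lt.1 hx) (hg.1 x)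

theorem IsLogConcaveFun.continuousAt_of_mem_interior (hg : IsLogConcaveFun g) {x : Euc n}
    (hx : x ∈ interior {x | 0 < g x}) : ContinuousAt g x := by
  have hlog : ContinuousAt (fun x => log (g x)) x :=
    hg.concaveOn_log.continuousOn_interior.continuousAt (isOpen_interior.mem_nhds hx)
  refine hlog.rexp.congr ?_
  filter_upwards [mem_interior_iff_mem_nhds.1 hx] with y hy using exp_log hy

theorem IsLogConcaveFun.ae_continuousAt (hg : IsLogConcaveFun g) : ∀ᵐ x, ContinuousAt g x := by
  filter_upwards [measure_eq_zero_iff_ae_notMem.1 (hg.concaveOn_log.1.addHaar_frontier volume)]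
    with x hx
  rcases em (x ∈ interior {x | 0 < g x}) with hint | hint
  · exact hg.continuousAt_of_mem_interior hint
  · have hext : {x | 0 < g x}ᶜ ∈ nhds x := by
      rw [← mem_interior_iff_mem_nhds, interior_compl]
      exact fun hcl => hx ⟨hcl, hint⟩
    exact (continuousAt_const (y := (0 : ℝ))).congr
      (hg.eqOn_zero_compl.eventuallyEq_of_mem hext).symm

theorem IsLogConcaveFun.nonempty_interior (hg : IsLogConcaveFun g) {w : Euc n → ℝ}
    (hμ : volume.withDensity (fun x => ENNReal.ofReal (w x * g x)) ≠ 0) :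
    (interior {x | 0 < g x}).Nonempty := by
  by_contra hempty
  have hnull := hg.concaveOn_log.1.addHaar_frontier volume
  rw [frontier, Set.not_nonempty_iff_eq_empty.1 hempty, Set.sdiff_empty] at hnull
  refine hμ ?_
  rw [← withDensity_zero]
  refine withDensity_congr_ae ?_
  filter_upwards [measure_eq_zero_iff_ae_notMem.1 hnull] with x hx
  simp [hg.eqOn_zero_compl fun h => hx (subset_closure h)]

theorem IsLogConcaveFun.le_mul_exp_of_closedBall (hg : IsLogConcaveFun g) {x₀ : Euc n} {r : ℝ}
    (hr : 0 < r) (hpos : 0 < g x₀) (hball : ∀ z ∈ Metric.closedBall x₀ r, g x₀ / 2 < g z)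
    (x : Euc n) : g x ≤ g x₀ * exp (log 2 / r * ‖x - x₀‖) := by
  rcases (hg.1 x).eq_or_lt with hx | hx
  · rw [← hx]
    positivity
  rcases eq_or_ne x x₀ with rfl | hne
  · simp
  have hd : 0 < ‖x - x₀‖ := norm_sub_pos_iff.2 hne
  set d := ‖x - x₀‖ with d_def
  set z := x₀ - (r / d) • (x - x₀) with z_def
  have hz : g x₀ / 2 < g z := hball z <| by
    rw [mem_closedBall_iff_norm, z_def, sub_sub_cancel_left, norm_neg, norm_smul, ← d_def,
      norm_of_nonneg (by positivity), div_mul_cancel₀ r hd.ne']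
  have hx₀ : (r / (r + d)) • x + (d / (r + d)) • z = x₀ := by
    rw [z_def]
    match_scalars <;> field_simp <;> ring
  have hlog : r / (r + d) * log (g x) + d / (r + d) * log (g z) ≤ log (g x₀) := by
    have h := hg.concaveOn_log.2 hx ((half_pos hpos).trans hz)
      (show 0 ≤ r / (r + d) by positivity) (show 0 ≤ d / (r + d) by positivity) (by field_simp)
    rwa [hx₀] at h
  have hlogz : log (g x₀) - log 2 ≤ log (g z) := by
    rw [← log_div hpos.ne' two_ne_zero]
    exact log_le_log (half_pos hpos) hz.le
  rw [← log_le_log_iff hx (by positivity), log_mul hpos.ne' (exp_pos _).ne', log_exp]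
  field_simp at hlog ⊢
  linarith [mul_le_mul_of_nonneg_left hlogz hd.le]

theorem IsLogConcaveFun.exists_le_mul_exp (hg : IsLogConcaveFun g)
    (hne : (interior {x | 0 < g x}).Nonempty) :
    ∃ A B : ℝ, 0 ≤ B ∧ ∀ x, g x ≤ A * exp (B * ‖x‖) := by
  obtain ⟨x₀, hx₀⟩ := hne
  have hpos : 0 < g x₀ := (interior_subset hx₀ : x₀ ∈ {x | 0 < g x})
  obtain ⟨r, hr, hball⟩ := Metric.nhds_basis_closedBall.mem_iff.1
    ((hg.continuousAt_of_mem_interior hx₀).eventually (lt_mem_nhds (half_lt_self hpos)))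
  have hB : 0 ≤ log 2 / r := div_nonneg (log_nonneg one_le_two) hr.le
  refine ⟨g x₀ * exp (log 2 / r * ‖x₀‖), log 2 / r, hB, fun x => ?_⟩
  rw [mul_assoc, ← exp_add, ← mul_add]
  refine (hg.le_mul_exp_of_closedBall hr hpos (fun z hz => hball hz) x).trans ?_
  gcongr
  rw [add_comm]
  exact norm_sub_le x x₀

end LogConcave

section LipschitzEnvelope

variable {n : ℕ} {g : Euc n → ℝ} {A B k : ℝ}

/-- The sup-convolution of `g` with `exp (-k‖·‖)`. For log-concave `g` of at most exponential
growth, its logarithm is the least `k`-Lipschitz majorant of `log g` once `k` is large. -/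
def lipEnvelope (g : Euc n → ℝ) (k : ℝ) (x : Euc n) : ℝ :=
  ⨆ y, g y * exp (-(k * ‖x - y‖))

theorem mul_exp_neg_le (hA : ∀ y, g y ≤ A * exp (B * ‖y‖)) (hA₀ : 0 ≤ A) (hB : 0 ≤ B)
    (x y : Euc n) :
    g y * exp (-(k * ‖x - y‖)) ≤ A * exp (B * ‖x‖) * exp (-((k - B) * ‖x - y‖)) := calc
  g y * exp (-(k * ‖x - y‖)) ≤ A * exp (B * ‖y‖) * exp (-(k * ‖x - y‖)) := by
    gcongr
    exact hA y
  _ ≤ A * exp (B * (‖x‖ + ‖x - y‖)) * exp (-(k * ‖x - y‖)) := by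
    gcongr
    simpa using norm_sub_le x (x - y)
  _ = A * exp (B * ‖x‖) * exp (-((k - B) * ‖x - y‖)) := by
    rw [mul_assoc, mul_assoc, ← exp_add, ← exp_add]
    ring_nf

theorem mul_exp_neg_le_of_le (hA : ∀ y, g y ≤ A * exp (B * ‖y‖)) (hA₀ : 0 ≤ A) (hB : 0 ≤ B)
    (hk : B ≤ k) (x y : Euc n) : g y * exp (-(k * ‖x - y‖)) ≤ A * exp (B * ‖x‖) :=
  (mul_exp_neg_le hA hA₀ hB x y).trans <| mul_le_of_le_one_right (by positivity) <|
    exp_le_one_iff.2 <| neg_nonpos.2 <| mul_nonneg (sub_nonneg.2 hk) (norm_nonneg _)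

theorem lipEnvelope_le (hA : ∀ y, g y ≤ A * exp (B * ‖y‖)) (hA₀ : 0 ≤ A) (hB : 0 ≤ B)
    (hk : B ≤ k) (x : Euc n) : lipEnvelope g k x ≤ A * exp (B * ‖x‖) :=
  ciSup_le (mul_exp_neg_le_of_le hA hA₀ hB hk x)

theorem mul_exp_neg_le_lipEnvelope (hA : ∀ y, g y ≤ A * exp (B * ‖y‖)) (hA₀ : 0 ≤ A)
    (hB : 0 ≤ B) (hk : B ≤ k) (x y : Euc n) :
    g y * exp (-(k * ‖x - y‖)) ≤ lipEnvelope g k x :=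
  le_ciSup (f := fun y => g y * exp (-(k * ‖x - y‖)))
    ⟨_, Set.forall_mem_range.2 (mul_exp_neg_le_of_le hA hA₀ hB hk x)⟩ y

theorem tendsto_lipEnvelope (hA : ∀ y, g y ≤ A * exp (B * ‖y‖)) (hA₀ : 0 ≤ A) (hB : 0 ≤ B)
    (hg₀ : ∀ y, 0 ≤ g y) {x : Euc n} (hx : ContinuousAt g x) :
    Filter.Tendsto (fun k => lipEnvelope g k x) .atTop (nhds (g x)) := by
  refine tendsto_order.2 ⟨fun a ha => ?_, fun a ha => ?_⟩
  · filter_upwards [Filter.eventually_ge_atTop B] with k hk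
    exact ha.trans_le (by simpa using mul_exp_neg_le_lipEnvelope hA hA₀ hB hk x x)
  obtain ⟨b, hxb, hba⟩ := exists_between ha
  obtain ⟨δ, hδ, hball⟩ := Metric.eventually_nhds_iff.1 (hx.eventually (gt_mem_nhds hxb))
  have hfar : Filter.Tendsto (fun k => A * exp (B * ‖x‖) * exp (-((k - B) * δ))) .atTop
      (nhds 0) := by
    have hk : Filter.Tendsto (fun k : ℝ => (k - B) * δ) .atTop .atTop :=
      (Filter.tendsto_atTop_add_const_right _ (-B) Filter.tendsto_id).atTop_mul_const hδ
    simpa using (tendsto_exp_neg_atTop_nhds_zero.comp hk).const_mul (A * exp (B * ‖x‖))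
  have hb₀ : 0 < b := (hg₀ x).trans_lt hxb
  filter_upwards [Filter.eventually_ge_atTop B, hfar.eventually (gt_mem_nhds hb₀)] with k hk hkb
  refine (ciSup_le fun y => ?_).trans_lt hba
  rcases lt_or_ge (dist y x) δ with hy | hy
  · refine (mul_le_of_le_one_right (hg₀ y) (exp_le_one_iff.2 ?_)).trans (hball hy).le
    exact neg_nonpos.2 (mul_nonneg (hB.trans hk) (norm_nonneg _))
  · rw [dist_comm, dist_eq_norm] at hy
    refine (mul_exp_neg_le hA hA₀ hB x y).trans (le_trans ?_ hkb.le)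
    gcongr

theorem lipEnvelope_pos (hA : ∀ y, g y ≤ A * exp (B * ‖y‖)) (hA₀ : 0 ≤ A) (hB : 0 ≤ B)
    (hk : B ≤ k) {y : Euc n} (hy : 0 < g y) (x : Euc n) : 0 < lipEnvelope g k x :=
  (mul_pos hy (exp_pos _)).trans_le (mul_exp_neg_le_lipEnvelope hA hA₀ hB hk x y)

theorem log_sub_le_log_lipEnvelope (hA : ∀ y, g y ≤ A * exp (B * ‖y‖)) (hA₀ : 0 ≤ A)
    (hB : 0 ≤ B) (hk : B ≤ k) (x : Euc n) {y : Euc n} (hy : 0 < g y) :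
    log (g y) - k * ‖x - y‖ ≤ log (lipEnvelope g k x) := by
  refine (le_log_iff_exp_le (lipEnvelope_pos hA hA₀ hB hk hy x)).2 ?_
  rw [sub_eq_add_neg, exp_add, exp_log hy]
  exact mul_exp_neg_le_lipEnvelope hA hA₀ hB hk x y

theorem exists_log_lipEnvelope_lt {x : Euc n} (hx : 0 < lipEnvelope g k x) {ε : ℝ}
    (hε : 0 < ε) : ∃ y, 0 < g y ∧ log (lipEnvelope g k x) < log (g y) - k * ‖x - y‖ + ε := by
  obtain ⟨y, hy⟩ := exists_lt_of_lt_ciSup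
    (mul_lt_of_lt_one_right hx (exp_lt_one_iff.2 (neg_lt_zero.2 hε)))
  have hgy : 0 < g y :=
    pos_of_mul_pos_left ((mul_pos hx (exp_pos _)).trans hy) (exp_pos _).le
  refine ⟨y, hgy, ?_⟩
  have h := log_lt_log (by positivity) hy
  rw [← lipEnvelope, log_mul hx.ne' (exp_pos _).ne', log_mul hgy.ne' (exp_pos _).ne', log_exp,
    log_exp] at h
  linarith

theorem lipschitzWith_log_lipEnvelope {k : NNReal} (hA : ∀ y, g y ≤ A * exp (B * ‖y‖))
    (hA₀ : 0 ≤ A) (hB : 0 ≤ B) (hk : B ≤ k) (hpos : ∀ x, 0 < lipEnvelope g k x) :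
    LipschitzWith k fun x => log (lipEnvelope g k x) := by
  refine LipschitzWith.of_le_add_mul k fun x x' => le_of_forall_pos_le_add fun ε hε => ?_
  obtain ⟨y, hy, hxy⟩ := exists_log_lipEnvelope_lt (hpos x) hε
  have hx' := log_sub_le_log_lipEnvelope hA hA₀ hB hk x' hy
  have htri : k * ‖x' - y‖ ≤ k * (‖x - x'‖ + ‖x - y‖) := by
    gcongr
    simpa [norm_sub_rev] using norm_sub_le_norm_sub_add_norm_sub x' x y
  rw [dist_eq_norm]
  linarith

theorem IsLogConcaveFun.concaveOn_log_lipEnvelope (hg : IsLogConcaveFun g)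
    (hA : ∀ y, g y ≤ A * exp (B * ‖y‖)) (hA₀ : 0 ≤ A) (hB : 0 ≤ B) (hk : B ≤ k)
    (hpos : ∀ x, 0 < lipEnvelope g k x) :
    ConcaveOn ℝ Set.univ fun x => log (lipEnvelope g k x) := by
  refine ⟨convex_univ, fun x₁ _ x₂ _ a b ha hb hab => le_of_forall_pos_le_add fun ε hε => ?_⟩
  obtain ⟨y₁, hy₁, h₁⟩ := exists_log_lipEnvelope_lt (hpos x₁) hε
  obtain ⟨y₂, hy₂, h₂⟩ := exists_log_lipEnvelope_lt (hpos x₂) hε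
  have hlog := hg.concaveOn_log.2 hy₁ hy₂ ha hb hab
  have hle := log_sub_le_log_lipEnvelope hA hA₀ hB hk (a • x₁ + b • x₂)
    (hg.concaveOn_log.1 hy₁ hy₂ ha hb hab)
  have htri : k * ‖a • x₁ + b • x₂ - (a • y₁ + b • y₂)‖ ≤
      k * (a * ‖x₁ - y₁‖ + b * ‖x₂ - y₂‖) := by
    refine mul_le_mul_of_nonneg_left ?_ (hB.trans hk)
    rw [add_sub_add_comm, ← smul_sub, ← smul_sub]
    simpa only [norm_smul_of_nonneg, ha, hb] using norm_add_le (a • (x₁ - y₁)) (b • (x₂ - y₂))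
  simp only [smul_eq_mul] at hlog ⊢
  linear_combination hlog + hle + htri + a * h₁ + b * h₂ + ε * hab

theorem IsLogConcaveFun.exists_contDiff_tendsto_exp (hg : IsLogConcaveFun g)
    (hA : ∀ y, g y ≤ A * exp (B * ‖y‖)) (hA₀ : 0 ≤ A) (hB : 0 ≤ B) {x₀ : Euc n}
    (hx₀ : 0 < g x₀) :
    ∃ L : ℕ → Euc n → ℝ, (∀ m, ContDiff ℝ ∞ (L m)) ∧ (∀ m, ConcaveOn ℝ Set.univ (L m)) ∧
      (∀ m x, exp (L m x) ≤ A * exp 1 * exp (B * ‖x‖)) ∧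
      ∀ᵐ x, Filter.Tendsto (fun m => exp (L m x)) .atTop (nhds (g x)) := by
  let k (m : ℕ) : NNReal := ⟨B, hB⟩ + m
  have hk m : B ≤ k m := le_add_of_nonneg_right m.cast_nonneg
  have hpos m := lipEnvelope_pos hA hA₀ hB (hk m) hx₀
  choose L hL_smooth hL_conc hL_near using fun m =>
    exists_contDiff_concaveOn_near (lipschitzWith_log_lipEnvelope hA hA₀ hB (hk m) (hpos m))
      (hg.concaveOn_log_lipEnvelope hA hA₀ hB (hk m) (hpos m)) (Nat.one_div_pos_of_nat (n := m))
  have hexp m x : exp (L m x) =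
      lipEnvelope g (k m) x * exp (L m x - log (lipEnvelope g (k m) x)) := by
    rw [exp_sub, exp_log (hpos m x), mul_div_cancel₀ _ (hpos m x).ne']
  refine ⟨L, hL_smooth, hL_conc, fun m x => ?_, ?_⟩
  · rw [hexp, mul_right_comm]
    gcongr
    · exact lipEnvelope_le hA hA₀ hB (hk m) x
    · refine (le_abs_self _).trans ((hL_near m x).trans ?_)
      exact (div_le_one m.cast_add_one_pos).2 (le_add_of_nonneg_left m.cast_nonneg)
  · filter_upwards [hg.ae_continuousAt] with x hx
    have hk_lim : Filter.Tendsto (fun m => (k m : ℝ)) .atTop .atTop :=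
      Filter.tendsto_atTop_add_const_left _ B tendsto_natCast_atTop_atTop
    have hdiff : Filter.Tendsto (fun m => L m x - log (lipEnvelope g (k m) x)) .atTop (nhds 0) :=
      squeeze_zero_norm (fun m => hL_near m x) tendsto_one_div_add_atTop_nhds_zero_nat
    simpa [hexp] using ((tendsto_lipEnvelope hA hA₀ hB hg.1 hx).comp hk_lim).mul hdiff.rexp

end LipschitzEnvelope

section QuadraticGrowth

variable {n : ℕ} {t A B : ℝ} {p f h : Euc n → ℝ} {K L : NNReal}

/-- Measurable functions bounded by a multiple of `(1 + ‖x‖) ^ 2`: the test functions along which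
log-concave measures are approximated by smooth ones. -/
structure HasQuadraticGrowth (p : Euc n → ℝ) : Prop where
  measurable : Measurable p
  exists_le : ∃ C, ∀ x, |p x| ≤ C * (1 + ‖x‖) ^ 2

theorem abs_le_mul_one_add_norm_of_lipschitzWith (hf : LipschitzWith K f) (x : Euc n) :
    |f x| ≤ (|f 0| + K) * (1 + ‖x‖) := by
  have h := hf.norm_sub_le x 0
  rw [sub_zero, Real.norm_eq_abs] at h
  nlinarith [abs_sub_abs_le_abs_sub (f x) (f 0), abs_nonneg (f 0), norm_nonneg x, K.2]

theorem hasQuadraticGrowth_mul (hf : LipschitzWith K f) (hh : LipschitzWith L h) :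
    HasQuadraticGrowth fun x => f x * h x where
  measurable := hf.continuous.measurable.mul hh.continuous.measurable
  exists_le := by
    refine ⟨(|f 0| + K) * (|h 0| + L), fun x => ?_⟩
    rw [abs_mul, sq, mul_mul_mul_comm]
    exact mul_le_mul (abs_le_mul_one_add_norm_of_lipschitzWith hf x)
      (abs_le_mul_one_add_norm_of_lipschitzWith hh x) (abs_nonneg _) (by positivity)

theorem hasQuadraticGrowth_of_lipschitzWith (hf : LipschitzWith K f) : HasQuadraticGrowth f := by
  simpa only [mul_one] using hasQuadraticGrowth_mul hf (LipschitzWith.const (1 : ℝ))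

theorem hasQuadraticGrowth_norm_gradient_sq (hf : LipschitzWith K f) :
    HasQuadraticGrowth fun x => ‖gradient f x‖ ^ 2 where
  measurable := (measurable_gradient f).norm.pow_const 2
  exists_le := by
    refine ⟨K ^ 2, fun x => ?_⟩
    rw [abs_of_nonneg (sq_nonneg _), ← mul_pow]
    gcongr
    refine (norm_gradient_le_of_lipschitzWith hf x).trans (le_mul_of_one_le_right K.2 ?_)
    exact le_add_of_nonneg_right (norm_nonneg x)

theorem one_add_sq_mul_exp_le (ht : 0 < t) {s : ℝ} (hs : 0 ≤ s) :
    (1 + s) ^ 2 * (exp (-(t / 2 * s ^ 2)) * exp (B * s)) ≤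
      4 * exp ((B + 1) ^ 2 / t) * exp (-(t / 4) * s ^ 2) := by
  have hpoly : (1 + s) ^ 2 ≤ 4 * exp s := by
    have hhalf := add_one_le_exp (s / 2)
    calc (1 + s) ^ 2 ≤ (2 * exp (s / 2)) ^ 2 := by gcongr; linarith
      _ = 4 * exp s := by
        rw [mul_pow, ← exp_nat_mul, Nat.cast_ofNat, mul_div_cancel₀ s two_ne_zero]
        norm_num
  have hsquare : (B + 1) * s ≤ (B + 1) ^ 2 / t + t / 4 * s ^ 2 := by
    have h : (B + 1) ^ 2 / t + t / 4 * s ^ 2 - (B + 1) * s =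
        (t * s - 2 * (B + 1)) ^ 2 / (4 * t) := by
      field_simp
      ring
    linarith [show 0 ≤ (t * s - 2 * (B + 1)) ^ 2 / (4 * t) by positivity]
  calc (1 + s) ^ 2 * (exp (-(t / 2 * s ^ 2)) * exp (B * s))
      ≤ 4 * exp s * (exp (-(t / 2 * s ^ 2)) * exp (B * s)) := by gcongr
    _ = 4 * exp (s + (-(t / 2 * s ^ 2) + B * s)) := by rw [mul_assoc, ← exp_add, ← exp_add]
    _ ≤ 4 * exp ((B + 1) ^ 2 / t + -(t / 4) * s ^ 2) := by
      refine mul_le_mul_of_nonneg_left (exp_le_exp.2 ?_) zero_le_four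
      linarith
    _ = 4 * exp ((B + 1) ^ 2 / t) * exp (-(t / 4) * s ^ 2) := by rw [exp_add, mul_assoc]

theorem integrable_one_add_norm_sq_mul_exp (ht : 0 < t) (B : ℝ) :
    Integrable fun x : Euc n =>
      (1 + ‖x‖) ^ 2 * (exp (-(t / 2 * ‖x‖ ^ 2)) * exp (B * ‖x‖)) := by
  have hgauss : Integrable fun x : Euc n => exp (-(t / 4) * ‖x‖ ^ 2) := by
    have h := (GaussianFourier.integrable_cexp_neg_mul_sq_norm_add (V := Euc n)
      (b := ((t / 4 : ℝ) : ℂ)) (by simpa using ht) 0 0).norm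
    simpa [Complex.norm_exp, ← Complex.ofReal_pow] using h
  refine (hgauss.const_mul (4 * exp ((B + 1) ^ 2 / t))).mono'
    (by fun_prop) (.of_forall fun x => ?_)
  rw [norm_of_nonneg (by positivity)]
  exact one_add_sq_mul_exp_le ht (norm_nonneg x)

theorem HasQuadraticGrowth.exists_integrable_bound (hp : HasQuadraticGrowth p) (ht : 0 < t)
    (A B : ℝ) : ∃ F : Euc n → ℝ, Integrable F ∧ ∀ x y, |y| ≤ A * exp (B * ‖x‖) →
      ‖p x * (exp (-(t / 2 * ‖x‖ ^ 2)) * y)‖ ≤ F x := by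
  obtain ⟨C, hC⟩ := hp.exists_le
  refine ⟨_, (integrable_one_add_norm_sq_mul_exp ht B).const_mul (C * A), fun x y hy => ?_⟩
  calc ‖p x * (exp (-(t / 2 * ‖x‖ ^ 2)) * y)‖
      = |p x| * (exp (-(t / 2 * ‖x‖ ^ 2)) * |y|) := by simp
    _ ≤ C * (1 + ‖x‖) ^ 2 * (exp (-(t / 2 * ‖x‖ ^ 2)) * (A * exp (B * ‖x‖))) := by
      gcongr
      · exact (abs_nonneg _).trans (hC x)
      · exact hC x
    _ = C * A * ((1 + ‖x‖) ^ 2 * (exp (-(t / 2 * ‖x‖ ^ 2)) * exp (B * ‖x‖))) := by ring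

theorem HasQuadraticGrowth.integrable_mul (hp : HasQuadraticGrowth p) (ht : 0 < t)
    (hf : Measurable f) (hA : ∀ x, |f x| ≤ A * exp (B * ‖x‖)) :
    Integrable fun x => p x * (exp (-(t / 2 * ‖x‖ ^ 2)) * f x) := by
  obtain ⟨F, hF, hbound⟩ := hp.exists_integrable_bound ht A B
  have hpm := hp.measurable
  exact hF.mono' (by fun_prop) (.of_forall fun x => hbound x _ (hA x))

theorem HasQuadraticGrowth.tendsto_integral_mul (hp : HasQuadraticGrowth p) (ht : 0 < t)
    {h : ℕ → Euc n → ℝ} (hh : ∀ m, Measurable (h m))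
    (hA : ∀ m x, |h m x| ≤ A * exp (B * ‖x‖))
    (hlim : ∀ᵐ x, Filter.Tendsto (fun m => h m x) .atTop (nhds (f x))) :
    Filter.Tendsto (fun m => ∫ x, p x * (exp (-(t / 2 * ‖x‖ ^ 2)) * h m x)) .atTop
      (nhds (∫ x, p x * (exp (-(t / 2 * ‖x‖ ^ 2)) * f x))) := by
  obtain ⟨F, hF, hbound⟩ := hp.exists_integrable_bound ht A B
  have hpm := hp.measurable
  refine tendsto_integral_of_dominated_convergence F (fun m => ?_) hF
    (fun m => .of_forall fun x => hbound x _ (hA m x)) ?_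
  · have := hh m
    fun_prop
  · filter_upwards [hlim] with x hx using (hx.const_mul _).const_mul _

end QuadraticGrowth

section Approximation

variable {n : ℕ} {t A B : ℝ} {L g p : Euc n → ℝ}

/-- The potential of the probability density proportional to `exp (-t‖x‖² / 2 + L x)`. -/
def tiltedPotential (t : ℝ) (L : Euc n → ℝ) (x : Euc n) : ℝ :=
  t / 2 * ‖x‖ ^ 2 - L x + log (∫ y, exp (-(t / 2 * ‖y‖ ^ 2)) * exp (L y))

theorem contDiff_tiltedPotential (hL : ContDiff ℝ ∞ L) : ContDiff ℝ ∞ (tiltedPotential t L) :=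
  ((contDiff_const.mul (contDiff_id.norm_sq ℝ)).sub hL).add contDiff_const

theorem strongConvexOn_tiltedPotential (hL : ConcaveOn ℝ Set.univ L) :
    StrongConvexOn Set.univ t (tiltedPotential t L) := by
  rw [strongConvexOn_iff_convex]
  simp only [tiltedPotential, add_sub_right_comm, sub_sub_cancel_left]
  exact hL.neg.add_const _

theorem integrable_exp_mul_exp (ht : 0 < t) (hL : Measurable L)
    (hA : ∀ x, exp (L x) ≤ A * exp (B * ‖x‖)) :
    Integrable fun x => exp (-(t / 2 * ‖x‖ ^ 2)) * exp (L x) := by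
  simpa using (hasQuadraticGrowth_of_lipschitzWith (LipschitzWith.const (1 : ℝ))).integrable_mul ht
    hL.exp (by simpa using hA)

theorem exp_neg_tiltedPotential
    (hint : Integrable fun x => exp (-(t / 2 * ‖x‖ ^ 2)) * exp (L x)) (x : Euc n) :
    exp (-tiltedPotential t L x) = exp (-(t / 2 * ‖x‖ ^ 2)) * exp (L x) /
      ∫ y, exp (-(t / 2 * ‖y‖ ^ 2)) * exp (L y) := by
  have hZ : 0 < ∫ y, exp (-(t / 2 * ‖y‖ ^ 2)) * exp (L y) := by
    simp only [← exp_add] at hint ⊢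
    exact integral_exp_pos hint
  rw [tiltedPotential, neg_add, neg_sub, sub_eq_neg_add, ← sub_eq_add_neg, exp_sub, exp_add,
    exp_log hZ]

theorem isProbabilityMeasure_gibbsMeasure_tiltedPotential
    (hint : Integrable fun x => exp (-(t / 2 * ‖x‖ ^ 2)) * exp (L x)) :
    IsProbabilityMeasure (gibbsMeasure (tiltedPotential t L)) := by
  constructor
  rw [gibbsMeasure, withDensity_apply _ .univ, setLIntegral_univ]
  simp only [exp_neg_tiltedPotential hint]
  rw [← ofReal_integral_eq_lintegral_ofReal (hint.div_const _)
    (.of_forall fun x => by positivity), integral_div, div_self, ENNReal.ofReal_one]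
  simp only [← exp_add] at hint ⊢
  exact (integral_exp_pos hint).ne'

theorem integrable_gibbsMeasure_tiltedPotential (hL : Measurable L)
    (hint : Integrable fun x => exp (-(t / 2 * ‖x‖ ^ 2)) * exp (L x))
    (hp : Integrable fun x => p x * (exp (-(t / 2 * ‖x‖ ^ 2)) * exp (L x))) :
    Integrable p (gibbsMeasure (tiltedPotential t L)) := by
  rw [integrable_gibbsMeasure_iff (by unfold tiltedPotential; fun_prop)]
  simpa only [exp_neg_tiltedPotential hint, mul_div_assoc] using hp.div_const _

theorem integral_gibbsMeasure_tiltedPotential (hL : Measurable L)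
    (hint : Integrable fun x => exp (-(t / 2 * ‖x‖ ^ 2)) * exp (L x)) :
    ∫ x, p x ∂gibbsMeasure (tiltedPotential t L) =
      (∫ x, p x * (exp (-(t / 2 * ‖x‖ ^ 2)) * exp (L x))) /
        ∫ x, exp (-(t / 2 * ‖x‖ ^ 2)) * exp (L x) := by
  rw [integral_gibbsMeasure (by unfold tiltedPotential; fun_prop), ← integral_div]
  simp only [exp_neg_tiltedPotential hint, mul_div_assoc]

theorem integral_withDensity_exp_mul (hgm : Measurable g) (hg₀ : ∀ x, 0 ≤ g x) :
    ∫ x, p x ∂volume.withDensity (fun x => ENNReal.ofReal (exp (-t * ‖x‖ ^ 2 / 2) * g x)) =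
      ∫ x, p x * (exp (-(t / 2 * ‖x‖ ^ 2)) * g x) := by
  rw [integral_withDensity_eq_integral_toReal_smul (by fun_prop) (by simp)]
  refine integral_congr_ae (.of_forall fun x => ?_)
  simp only [ENNReal.toReal_ofReal (mul_nonneg (exp_pos _).le (hg₀ x)), smul_eq_mul]
  ring_nf

theorem integrable_withDensity_exp_mul (hgm : Measurable g) (hg₀ : ∀ x, 0 ≤ g x)
    (hp : Integrable fun x => p x * (exp (-(t / 2 * ‖x‖ ^ 2)) * g x)) :
    Integrable p
      (volume.withDensity fun x => ENNReal.ofReal (exp (-t * ‖x‖ ^ 2 / 2) * g x)) := by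
  rw [integrable_withDensity_iff (by fun_prop) (by simp)]
  refine hp.congr (.of_forall fun x => ?_)
  simp only [ENNReal.toReal_ofReal (mul_nonneg (exp_pos _).le (hg₀ x))]
  ring_nf

theorem UniformlyLogConcave.exists_density {μ : Measure (Euc n)} [NeZero μ]
    (hμ : UniformlyLogConcave t μ) : ∃ g : Euc n → ℝ, ∃ A B : ℝ, Measurable g ∧
      IsLogConcaveFun g ∧ 0 ≤ A ∧ 0 ≤ B ∧ (∀ x, g x ≤ A * exp (B * ‖x‖)) ∧ (∃ x₀, 0 < g x₀) ∧
      μ = volume.withDensity fun x => ENNReal.ofReal (exp (-t * ‖x‖ ^ 2 / 2) * g x) := by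
  obtain ⟨g, hgm, hg, rfl⟩ := hμ
  have hne := hg.nonempty_interior (w := fun x => exp (-t * ‖x‖ ^ 2 / 2)) (NeZero.ne _)
  obtain ⟨A, B, hB, hA⟩ := hg.exists_le_mul_exp hne
  have hA₀ : 0 ≤ A := by simpa using (hg.1 0).trans (hA 0)
  exact ⟨g, A, B, hgm, hg, hA₀, hB, hA, hne.mono interior_subset, rfl⟩

theorem UniformlyLogConcave.integrable {μ : Measure (Euc n)} [NeZero μ]
    (hμ : UniformlyLogConcave t μ) (ht : 0 < t) (hp : HasQuadraticGrowth p) : Integrable p μ := by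
  obtain ⟨g, A, B, hgm, hg, -, -, hA, -, rfl⟩ := hμ.exists_density
  exact integrable_withDensity_exp_mul hgm hg.1 <| hp.integrable_mul ht hgm (A := A) (B := B)
    fun x => (abs_of_nonneg (hg.1 x)).trans_le (hA x)

theorem UniformlyLogConcave.exists_tendsto_integral_gibbsMeasure {μ : Measure (Euc n)}
    [IsProbabilityMeasure μ] (hμ : UniformlyLogConcave t μ) (ht : 0 < t) :
    ∃ ψ : ℕ → Euc n → ℝ, (∀ m, ContDiff ℝ ∞ (ψ m)) ∧ (∀ m, StrongConvexOn Set.univ t (ψ m)) ∧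
      (∀ m, IsProbabilityMeasure (gibbsMeasure (ψ m))) ∧ ∀ p, HasQuadraticGrowth p →
        (∀ m, Integrable p (gibbsMeasure (ψ m))) ∧
        Filter.Tendsto (fun m => ∫ x, p x ∂gibbsMeasure (ψ m)) .atTop (nhds (∫ x, p x ∂μ)) := by
  obtain ⟨g, A, B, hgm, hg, hA₀, hB, hA, ⟨x₀, hx₀⟩, rfl⟩ := hμ.exists_density
  obtain ⟨L, hL_smooth, hL_conc, hL_le, hL_lim⟩ :=
    hg.exists_contDiff_tendsto_exp hA hA₀ hB hx₀
  have hLm m : Measurable (L m) := (hL_smooth m).continuous.measurable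
  have hint m := integrable_exp_mul_exp ht (hLm m) (hL_le m)
  have hone : HasQuadraticGrowth fun _ : Euc n => (1 : ℝ) :=
    hasQuadraticGrowth_of_lipschitzWith (LipschitzWith.const 1)
  have hlim {p : Euc n → ℝ} (hp : HasQuadraticGrowth p) := hp.tendsto_integral_mul ht
    (fun m => (hLm m).exp) (fun m x => (abs_of_pos (exp_pos _)).trans_le (hL_le m x)) hL_lim
  refine ⟨fun m => tiltedPotential t (L m), fun m => contDiff_tiltedPotential (hL_smooth m),
    fun m => strongConvexOn_tiltedPotential (hL_conc m),
    fun m => isProbabilityMeasure_gibbsMeasure_tiltedPotential (hint m), fun p hp =>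
    ⟨fun m => integrable_gibbsMeasure_tiltedPotential (hLm m) (hint m)
      (hp.integrable_mul ht (hLm m).exp fun x => (abs_of_pos (exp_pos _)).trans_le (hL_le m x)),
    ?_⟩⟩
  have hmass : ∫ x, exp (-(t / 2 * ‖x‖ ^ 2)) * g x = 1 := by
    have h := integral_withDensity_exp_mul (t := t) (p := fun _ => 1) hgm hg.1
    rw [integral_const, probReal_univ] at h
    simpa using h.symm
  simp only [integral_gibbsMeasure_tiltedPotential (hLm _) (hint _),
    integral_withDensity_exp_mul hgm hg.1]
  simpa [hmass, Pi.div_def] using (hlim hp).div (hlim hone) (by simp [hmass])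

end Approximation

section Covariance

open ProbabilityTheory

variable {n : ℕ} {μ : Measure (Euc n)} [IsProbabilityMeasure μ] {C : ℝ}

theorem inner_toEuclideanCLM_covMatrix (hid : MemLp (fun x : Euc n => x) 2 μ) (v w : Euc n) :
    ⟪v, Matrix.toEuclideanCLM (𝕜 := ℝ) (covMatrix μ) w⟫ =
      cov[fun x => ⟪v, x⟫, fun x => ⟪w, x⟫; μ] := by
  have hcoord i : MemLp (fun x : Euc n => x i) 2 μ := hid.eval_piLp i
  have hcov i j : covMatrix μ i j = cov[fun x => x i, fun x => x j; μ] :=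
    (covariance_eq_sub (hcoord i) (hcoord j)).symm
  rw [Matrix.inner_toEuclideanCLM, dotProduct]
  simp only [PiLp.inner_apply, RCLike.inner_apply, conj_trivial]
  rw [covariance_fun_sum_fun_sum (fun i => (hcoord i).mul_const _)
    fun i => (hcoord i).mul_const _]
  refine Finset.sum_congr rfl fun i _ => ?_
  rw [Matrix.mulVec, dotProduct, Finset.mul_sum]
  refine Finset.sum_congr rfl fun j _ => ?_
  rw [covariance_mul_const_left, covariance_mul_const_right, hcov]
  ring

theorem variance_inner_le_opNorm_covMatrix (hid : MemLp (fun x : Euc n => x) 2 μ) (v : Euc n) :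
    Var[fun x => ⟪v, x⟫; μ] ≤ opNorm (covMatrix μ) * ‖v‖ ^ 2 := by
  rw [← covariance_self (by fun_prop), ← inner_toEuclideanCLM_covMatrix hid, sq, mul_left_comm]
  exact (real_inner_le_norm _ _).trans
    (mul_le_mul_of_nonneg_left (ContinuousLinearMap.le_opNorm _ v) (norm_nonneg v))

theorem opNorm_covMatrix_le (hid : MemLp (fun x : Euc n => x) 2 μ) (hC : 0 ≤ C)
    (h : ∀ v, Var[fun x => ⟪v, x⟫; μ] ≤ C * ‖v‖ ^ 2) : opNorm (covMatrix μ) ≤ C := by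
  set T := Matrix.toEuclideanCLM (𝕜 := ℝ) (covMatrix μ)
  have hsymm : (T : Euc n →ₗ[ℝ] Euc n).IsSymmetric := fun v w => by
    rw [ContinuousLinearMap.coe_coe, real_inner_comm, inner_toEuclideanCLM_covMatrix hid,
      inner_toEuclideanCLM_covMatrix hid, covariance_comm]
  rw [opNorm, ContinuousLinearMap.norm_eq_iSup_rayleighQuotient T hsymm]
  refine ciSup_le fun v => ?_
  have hv : ⟪T v, v⟫ = Var[fun x => ⟪v, x⟫; μ] := by
    rw [real_inner_comm, inner_toEuclideanCLM_covMatrix hid, covariance_self (by fun_prop)]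
  rw [ContinuousLinearMap.rayleighQuotient, ContinuousLinearMap.reApplyInnerSelf_apply,
    RCLike.re_to_real, hv, abs_of_nonneg (div_nonneg (variance_nonneg _ _) (sq_nonneg _))]
  exact div_le_of_le_mul₀ (sq_nonneg _) hC (h v)

theorem continuous_opNorm : Continuous (opNorm : Matrix (Fin n) (Fin n) ℝ → ℝ) :=
  (LinearMap.continuous_of_finiteDimensional
    (Matrix.toEuclideanCLM (n := Fin n) (𝕜 := ℝ)).toAlgEquiv.toLinearMap).norm

end Covariance

section LipschitzPoincare

open ProbabilityTheory

variable {n : ℕ} {t : ℝ} {μ : Measure (Euc n)} {f : Euc n → ℝ} {K : NNReal}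

theorem memLp_two_of_lipschitzWith (hμ : ∀ p, HasQuadraticGrowth p → Integrable p μ)
    (hf : LipschitzWith K f) : MemLp f 2 μ := by
  refine (memLp_two_iff_integrable_sq hf.continuous.aestronglyMeasurable).2 ?_
  simpa only [sq] using hμ _ (hasQuadraticGrowth_mul hf hf)

theorem memLp_two_id (hμ : ∀ p, HasQuadraticGrowth p → Integrable p μ) :
    MemLp (fun x : Euc n => x) 2 μ :=
  (memLp_norm_iff (by fun_prop)).1 (memLp_two_of_lipschitzWith hμ lipschitzWith_one_norm)

theorem tendsto_covMatrix {γ : ℕ → Measure (Euc n)}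
    (hγ : ∀ p, HasQuadraticGrowth p →
      Filter.Tendsto (fun m => ∫ x, p x ∂γ m) .atTop (nhds (∫ x, p x ∂μ))) :
    Filter.Tendsto (fun m => covMatrix (γ m)) .atTop (nhds (covMatrix μ)) := by
  have hcoord i : LipschitzWith _ fun x : Euc n => x i :=
    (EuclideanSpace.proj (𝕜 := ℝ) i).lipschitz
  refine tendsto_pi_nhds.2 fun i => tendsto_pi_nhds.2 fun j => ?_
  exact (hγ _ (hasQuadraticGrowth_mul (hcoord i) (hcoord j))).sub <|
    (hγ _ (hasQuadraticGrowth_of_lipschitzWith (hcoord i))).mul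
      (hγ _ (hasQuadraticGrowth_of_lipschitzWith (hcoord j)))

theorem UniformlyLogConcave.sub_sq_integral_le [IsProbabilityMeasure μ]
    (hμ : UniformlyLogConcave t μ) (ht : 0 < t) (hf : LipschitzWith K f) :
    ∫ x, f x ^ 2 ∂μ - (∫ x, f x ∂μ) ^ 2 ≤
      √(opNorm (covMatrix μ) / t) * ∫ x, ‖gradient f x‖ ^ 2 ∂μ := by
  obtain ⟨ψ, hψ, hψ_conv, hψ_prob, hlim⟩ := hμ.exists_tendsto_integral_gibbsMeasure ht
  have hint m p (hp : HasQuadraticGrowth p) : Integrable p (gibbsMeasure (ψ m)) := (hlim p hp).1 m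
  have hsq : HasQuadraticGrowth fun x => f x ^ 2 := by
    simpa only [sq] using hasQuadraticGrowth_mul hf hf
  have hconst := ((continuous_opNorm.tendsto _).comp
    (tendsto_covMatrix fun p hp => (hlim p hp).2)).div_const t
  refine le_of_tendsto_of_tendsto'
    ((hlim _ hsq).2.sub ((hlim _ (hasQuadraticGrowth_of_lipschitzWith hf)).2.pow 2))
    (hconst.sqrt.mul (hlim _ (hasQuadraticGrowth_norm_gradient_sq hf)).2) fun m => ?_
  have hid := memLp_two_id (hint m)
  have hf₂ := memLp_two_of_lipschitzWith (hint m) hf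
  exact (variance_eq_sub hf₂).symm.trans_le <| variance_le_sqrt_mul_of_le_hessian ht (hψ m)
    (le_hessian_of_strongConvexOn ((hψ m).of_le ENat.LEInfty.out) (hψ_conv m)) hid
    (norm_nonneg _) (variance_inner_le_opNorm_covMatrix hid) hf hf₂

end LipschitzPoincare

section LocallyLipschitz

theorem exists_lipschitzWith_of_hasCompactSupport {X F : Type*} [PseudoMetricSpace X]
    [ProperSpace X] [NormedAddCommGroup F] {f : X → F} (hf : LocallyLipschitz f)
    (hf_supp : HasCompactSupport f) : ∃ K, LipschitzWith K f := by
  obtain ⟨K, hK⟩ := hf.locallyLipschitzOn.exists_lipschitzOnWith_of_compact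
    (hf_supp.isCompact.cthickening (r := 1))
  obtain ⟨M, hM⟩ := hf_supp.exists_bound_of_continuous hf.continuous
  have hdist x y (hx : x ∈ tsupport f) : dist (f x) (f y) ≤ (K + 2 * |M|) * dist x y := by
    rcases le_total (dist x y) 1 with hxy | hxy
    · have hy := Metric.mem_cthickening_of_dist_le y x 1 _ hx (by rwa [dist_comm])
      refine (hK.dist_le_mul x (Metric.self_subset_cthickening _ hx) y hy).trans ?_
      gcongr
      exact le_add_of_nonneg_right (by positivity)
    · calc dist (f x) (f y) ≤ 2 * |M| := by
            linarith [dist_le_norm_add_norm (f x) (f y), hM x, hM y, le_abs_self M]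
        _ ≤ K + 2 * |M| := le_add_of_nonneg_left K.2
        _ ≤ (K + 2 * |M|) * dist x y := le_mul_of_one_le_right (by positivity) hxy
  refine ⟨K + 2 * ‖M‖₊, .of_dist_le_mul fun x y => ?_⟩
  by_cases hx : x ∈ tsupport f
  · exact hdist x y hx
  by_cases hy : y ∈ tsupport f
  · rw [dist_comm, dist_comm x]
    exact hdist y x hy
  · rw [image_eq_zero_of_notMem_tsupport hx, image_eq_zero_of_notMem_tsupport hy, dist_self]
    positivity

variable {E : Type*} [NormedAddCommGroup E]

theorem ae_differentiableAt_of_locallyLipschitz [NormedSpace ℝ E] [FiniteDimensional ℝ E]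
    [MeasurableSpace E] [BorelSpace E] {μ : Measure E} [μ.IsAddHaarMeasure] {f : E → ℝ}
    (hf : LocallyLipschitz f) : ∀ᵐ x ∂μ, DifferentiableAt ℝ f x := by
  have hball (k : ℕ) : ∀ᵐ x ∂μ, x ∈ Metric.ball (0 : E) k →
      DifferentiableWithinAt ℝ f (Metric.ball 0 k) x := by
    obtain ⟨K, hK⟩ := hf.locallyLipschitzOn.exists_lipschitzOnWith_of_compact
      (isCompact_closedBall (0 : E) k)
    exact (hK.mono Metric.ball_subset_closedBall).ae_differentiableWithinAt_of_mem
  filter_upwards [ae_all_iff.2 hball] with x hx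
  obtain ⟨k, hk⟩ := exists_nat_gt ‖x‖
  have hxk : x ∈ Metric.ball (0 : E) k := mem_ball_zero_iff.2 hk
  exact (hx k hxk).differentiableAt (Metric.isOpen_ball.mem_nhds hxk)

theorem norm_gradient_mul_sq_le [InnerProductSpace ℝ E] [CompleteSpace E] {f χ : E → ℝ} {M : ℝ}
    {x : E} (hχ : DifferentiableAt ℝ χ x) (hf : DifferentiableAt ℝ f x)
    (hχ₁ : χ x ∈ Set.Icc 0 1) (hM : ‖gradient χ x‖ ≤ M) :
    ‖gradient (fun y => χ y * f y) x‖ ^ 2 ≤ 2 * ‖gradient f x‖ ^ 2 + 2 * M ^ 2 * f x ^ 2 := by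
  rw [gradient_mul hχ hf]
  have hnorm : ‖χ x • gradient f x + f x • gradient χ x‖ ≤ ‖gradient f x‖ + M * |f x| := by
    refine (norm_add_le _ _).trans (add_le_add ?_ ?_)
    · rw [norm_smul, norm_of_nonneg hχ₁.1]
      exact mul_le_of_le_one_left (norm_nonneg _) hχ₁.2
    · rw [norm_smul, Real.norm_eq_abs, mul_comm]
      gcongr
  calc _ ≤ (‖gradient f x‖ + M * |f x|) ^ 2 := by gcongr
    _ ≤ 2 * (‖gradient f x‖ ^ 2 + (M * |f x|) ^ 2) := add_sq_le
    _ = _ := by rw [mul_pow, sq_abs]; ring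

theorem exists_lipschitzWith_approx [InnerProductSpace ℝ E] [FiniteDimensional ℝ E] {f : E → ℝ}
    (hf : LocallyLipschitz f) : ∃ (M : ℝ) (h : ℕ → E → ℝ), (∀ k, ∃ K, LipschitzWith K (h k)) ∧
      (∀ k x, |h k x| ≤ |f x|) ∧ (∀ k x, DifferentiableAt ℝ f x →
        ‖gradient (h k) x‖ ^ 2 ≤ 2 * ‖gradient f x‖ ^ 2 + 2 * M ^ 2 * f x ^ 2) ∧
      ∀ x, ∀ᶠ k in .atTop, h k =ᶠ[nhds x] f := by
  obtain ⟨M, hM⟩ := exists_cutoff E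
  choose χ hχ hχ₁ hχ_one hχ_grad using fun k : ℕ => hM (k + 1) (by simp)
  refine ⟨|M|, fun k x => χ k x * f x, fun k => ?_, fun k x => ?_, fun k x hx => ?_, fun x => ?_⟩
  · have hmul : LocallyLipschitz fun p : ℝ × ℝ => p.1 * p.2 :=
      (contDiff_mul (𝕜 := ℝ)).locallyLipschitz
    obtain ⟨K, hK⟩ := (hχ k).exists_lipschitzWith
    exact exists_lipschitzWith_of_hasCompactSupport (hmul.comp (hK.locallyLipschitz.prodMk hf))
      (hχ k).hasCompactSupport.mul_right
  · rw [abs_mul, abs_of_nonneg (hχ₁ k x).1]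
    exact mul_le_of_le_one_left (abs_nonneg _) (hχ₁ k x).2
  · refine norm_gradient_mul_sq_le (hχ k).differentiable.differentiableAt hx (hχ₁ k x) ?_
    calc ‖gradient (χ k) x‖ ≤ M / (k + 1) := hχ_grad k x
      _ ≤ |M| / (k + 1) := by gcongr; exact le_abs_self M
      _ ≤ |M| := div_le_self (abs_nonneg M) (by simp)
  · filter_upwards [Filter.eventually_ge_atTop ⌈‖x‖⌉₊] with k hk
    have hxk : x ∈ Metric.ball (0 : E) (k + 1) := by
      rw [mem_ball_zero_iff]
      linarith [Nat.ceil_le.1 hk]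
    filter_upwards [Metric.isOpen_ball.mem_nhds hxk] with y hy
    rw [hχ_one k y (mem_ball_zero_iff.1 hy).le, one_mul]

theorem mem_poincareSet_of_forall_lipschitzWith {n : ℕ} {μ : Measure (Euc n)}
    [IsProbabilityMeasure μ] (hμ : μ ≪ volume) {C : ℝ} (hC : 0 ≤ C)
    (hlip : ∀ (f : Euc n → ℝ) (K : NNReal), LipschitzWith K f →
      ∫ x, f x ^ 2 ∂μ - (∫ x, f x ∂μ) ^ 2 ≤ C * ∫ x, ‖gradient f x‖ ^ 2 ∂μ) :
    C ∈ poincareSet μ := by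
  refine ⟨hC, fun f hf hgrad => ?_⟩
  by_cases hf₂ : Integrable (fun x => f x ^ 2) μ
  swap
  · rw [integral_undef hf₂]
    linarith [sq_nonneg (∫ x, f x ∂μ),
      mul_nonneg hC (integral_nonneg (μ := μ) fun x => sq_nonneg ‖gradient f x‖)]
  have hf₁ : Integrable f μ :=
    ((memLp_two_iff_integrable_sq hf.continuous.aestronglyMeasurable).2 hf₂).integrable
      one_le_two
  obtain ⟨M, h, hh_lip, hh_le, hh_grad, hh_eq⟩ := exists_lipschitzWith_approx hf
  have hh_meas k : AEStronglyMeasurable (h k) μ :=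
    (hh_lip k).choose_spec.continuous.aestronglyMeasurable
  have hlim x : Filter.Tendsto (fun k => h k x) .atTop (nhds (f x)) :=
    tendsto_nhds_of_eventually_eq ((hh_eq x).mono fun k hk => hk.self_of_nhds)
  have hint := tendsto_integral_of_dominated_convergence (fun x => |f x|) hh_meas hf₁.abs
    (fun k => .of_forall (hh_le k)) (.of_forall hlim)
  have hint_sq := tendsto_integral_of_dominated_convergence (fun x => f x ^ 2)
    (fun k => (hh_meas k).pow 2) hf₂
    (fun k => .of_forall fun x => by simpa using sq_le_sq.2 (hh_le k x))
    (.of_forall fun x => (hlim x).pow 2)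
  have hint_grad : Filter.Tendsto (fun k => ∫ x, ‖gradient (h k) x‖ ^ 2 ∂μ) .atTop
      (nhds (∫ x, ‖gradient f x‖ ^ 2 ∂μ)) := by
    refine tendsto_integral_of_dominated_convergence _
      (fun k => ((measurable_gradient (h k)).norm.pow_const 2).aestronglyMeasurable)
      ((hgrad.const_mul 2).add (hf₂.const_mul (2 * M ^ 2))) (fun k => ?_)
      (.of_forall fun x => tendsto_nhds_of_eventually_eq ?_)
    · filter_upwards [hμ.ae_le (ae_differentiableAt_of_locallyLipschitz hf)] with x hx
      rw [norm_of_nonneg (sq_nonneg _)]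
      exact hh_grad k x hx
    · filter_upwards [hh_eq x] with k hk
      rw [gradient, hk.fderiv_eq, ← gradient]
  exact le_of_tendsto_of_tendsto' (hint_sq.sub (hint.pow 2)) (hint_grad.const_mul C) fun k =>
    hlip (h k) _ (hh_lip k).choose_spec

end LocallyLipschitz

section Covariance

open ProbabilityTheory

variable {n : ℕ} {t : ℝ} {μ : Measure (Euc n)}

theorem UniformlyLogConcave.absolutelyContinuous (hμ : UniformlyLogConcave t μ) : μ ≪ volume := by
  obtain ⟨g, -, -, rfl⟩ := hμ
  exact withDensity_absolutelyContinuous _ _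

theorem UniformlyLogConcave.opNorm_covMatrix_le_sqrt [IsProbabilityMeasure μ]
    (hμ : UniformlyLogConcave t μ) (ht : 0 < t) :
    opNorm (covMatrix μ) ≤ √(opNorm (covMatrix μ) / t) := by
  have hint p (hp : HasQuadraticGrowth p) : Integrable p μ := hμ.integrable ht hp
  refine opNorm_covMatrix_le (memLp_two_id hint) (sqrt_nonneg _) fun v => ?_
  have hv : LipschitzWith _ fun x : Euc n => ⟪v, x⟫ := (innerSL ℝ v).lipschitz
  rw [variance_eq_sub (memLp_two_of_lipschitzWith hint hv)]
  simpa [gradient_inner_left] using hμ.sub_sq_integral_le ht hv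

theorem sqrt_div_le_one_div {κ : ℝ} (ht : 0 < t) (hκ₀ : 0 ≤ κ) (hκ : κ ≤ √(κ / t)) :
    √(κ / t) ≤ 1 / t := by
  rcases hκ₀.eq_or_lt with rfl | hκ_pos
  · simpa using ht.le
  have hκt : κ * κ ≤ κ * (1 / t) := by
    rw [← sq, mul_one_div]
    exact (le_sqrt' hκ_pos).1 hκ
  rw [sqrt_le_left (by positivity), sq, div_eq_mul_one_div]
  gcongr
  exact le_of_mul_le_mul_left hκt hκ_pos

end Covariance

end

/-- Improved log-concave Lichnerowicz inequality. -/
theorem improved_lichnerowicz {n : ℕ} (t : ℝ) (ht : 0 < t) (μ : Measure (Euc n))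
    [IsProbabilityMeasure μ] (h : UniformlyLogConcave t μ) :
    poincareConst μ ≤ Real.sqrt (opNorm (covMatrix μ) / t) ∧
    Real.sqrt (opNorm (covMatrix μ) / t) ≤ 1 / t := by
  have hmem : √(opNorm (covMatrix μ) / t) ∈ poincareSet μ :=
    mem_poincareSet_of_forall_lipschitzWith h.absolutelyContinuous (sqrt_nonneg _)
      fun _ _ => h.sub_sq_integral_le ht
  have hbdd : BddBelow (poincareSet μ) := ⟨0, fun _ hC => hC.1⟩
  exact ⟨csInf_le hbdd hmem,
    sqrt_div_le_one_div ht (norm_nonneg _) (h.opNorm_covMatrix_le_sqrt ht)⟩
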